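/- Assume N ≥ 1, σ > 0, Nσ ≤ 4, m > 0, and u ∈ H²(ℝ^N) is a minimizer of E on {v ∈ H²(ℝ^N) : ‖v‖_{L²}² = m}. Then there exists c = c(u) > 0 such that Δ²u + 2Δu + (1+c)u - |u|^{2σ}u = 0 in H^{-2}(ℝ^N), and 1 + c ∈ [-E'_{min,ℓ}(m), -E'_{min,r}(m)], where E'_{min,ℓ} and E'_{min,r} are the left and right derivatives of the concave function E_min. Moreover: if m₁ < m₂, u₁ minimizes E at mass m₁ and u₂ minimizes E at mass m₂, then c(u₁) < c(u₂); and if m₀ := sup{m > 0 : E_min(m) = -m} is positive, then for every m ∈ (0, m₀) there is no minimizer of E on {v ∈ H²(ℝ^N) : ‖v‖_{L²}² = m}. -/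

import Mathlib

open MeasureTheory Filter Topology

noncomputable section

abbrev Esp (N : ℕ) := EuclideanSpace ℝ (Fin N)

/-- Smooth compactly supported test functions. -/
def TestFun {N : ℕ} (φ : Esp N → ℂ) : Prop :=
  ContDiff ℝ (⊤ : ℕ∞) φ ∧ HasCompactSupport φ

/-- Partial derivative in the `i`-th coordinate direction. -/
def pderivC {N : ℕ} (i : Fin N) (φ : Esp N → ℂ) : Esp N → ℂ :=
  fun x => fderiv ℝ φ x (EuclideanSpace.single i (1 : ℝ))

/-- The Laplacian of a (smooth) function. -/
def lapC {N : ℕ} (φ : Esp N → ℂ) : Esp N → ℂ :=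
  fun x => ∑ i, pderivC i (pderivC i φ) x

/-- `v` is the weak `i`-th partial derivative of `u`. -/
def IsWeakPDeriv {N : ℕ} (u : Esp N → ℂ) (i : Fin N) (v : Esp N → ℂ) : Prop :=
  ∀ φ : Esp N → ℂ, TestFun φ → ∫ x, u x * pderivC i φ x = - ∫ x, v x * φ x

/-- `v` is the weak Laplacian of `u`. -/
def IsWeakLap {N : ℕ} (u v : Esp N → ℂ) : Prop :=
  ∀ φ : Esp N → ℂ, TestFun φ → ∫ x, u x * lapC φ x = ∫ x, v x * φ x

/-- An element of the Sobolev space `H²(ℝ^N, ℂ)`: an `L²` function together with its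
weak partial derivatives and its weak Laplacian, all in `L²`. -/
structure H2 (N : ℕ) where
  u : Esp N → ℂ
  grad : Fin N → Esp N → ℂ
  lapl : Esp N → ℂ
  u_mem : MemLp u 2 (volume : Measure (Esp N))
  grad_mem : ∀ i, MemLp (grad i) 2 (volume : Measure (Esp N))
  lapl_mem : MemLp lapl 2 (volume : Measure (Esp N))
  grad_spec : ∀ i, IsWeakPDeriv u i (grad i)
  lapl_spec : IsWeakLap u lapl

namespace H2

variable {N : ℕ}

/-- `∫ |u|²`. -/
def massSq (U : H2 N) : ℝ := ∫ x, ‖U.u x‖ ^ 2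

/-- `∫ |∇u|²`. -/
def gradSq (U : H2 N) : ℝ := ∑ i, ∫ x, ‖U.grad i x‖ ^ 2

/-- `∫ |Δu|²`. -/
def lapSq (U : H2 N) : ℝ := ∫ x, ‖U.lapl x‖ ^ 2

/-- `∫ |u|^{2σ+2}`. -/
def pPow (σ : ℝ) (U : H2 N) : ℝ := ∫ x, ‖U.u x‖ ^ (2 * σ + 2)

/-- The energy `E(u) = ∫|Δu|² - 2∫|∇u|² - (1/(σ+1))∫|u|^{2σ+2}`. -/
def energy (σ : ℝ) (U : H2 N) : ℝ :=
  U.lapSq - 2 * U.gradSq - (1 / (σ + 1)) * U.pPow σ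

/-- The square of the `H²` norm. -/
def h2NormSq (U : H2 N) : ℝ := U.massSq + U.gradSq + U.lapSq

/-- `u` does not vanish almost everywhere. -/
def Nontriv (U : H2 N) : Prop := ¬ (U.u =ᵐ[(volume : Measure (Esp N))] 0)

end H2

/-- `E_min(m) = inf {E(u) : u ∈ H², ∫|u|² = m}`, with values in `EReal`. -/
def EminE (N : ℕ) (σ m : ℝ) : EReal :=
  ⨅ (U : H2 N) (_ : U.massSq = m), ((U.energy σ : ℝ) : EReal)

/-- The `L^p` norm (as a real number) of a function on `ℝ^N`. -/
def rLp {N : ℕ} (p : ℝ) (f : Esp N → ℂ) : ℝ :=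
  (eLpNorm f (ENNReal.ofReal p) (volume : Measure (Esp N))).toReal


/-- The best constant `B(N,σ)` in the Gagliardo–Nirenberg–Sobolev inequality
`‖u‖_{L^{2σ+2}}^{2σ+2} ≤ B ‖Δu‖_{L²}^{Nσ/2} ‖u‖_{L²}^{2+2σ-Nσ/2}`. -/
def GNconst (N : ℕ) (σ : ℝ) : ℝ :=
  sSup {r : ℝ | ∃ U : H2 N, U.Nontriv ∧
    r = U.pPow σ /
      (rLp 2 U.lapl ^ ((N : ℝ) * σ / 2) * rLp 2 U.u ^ (2 + 2 * σ - (N : ℝ) * σ / 2))}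

/-- `k* = (σ+1)^{1/σ} B(N,σ)^{-1/σ}`. -/
def kstar (N : ℕ) (σ : ℝ) : ℝ := (σ + 1) ^ (1 / σ) * GNconst N σ ^ (-(1 / σ))

/-- Strong `H²` convergence of `v k (· + xs k)` to `U`. -/
def H2TendstoTrans {N : ℕ} (v : ℕ → H2 N) (xs : ℕ → Esp N) (U : H2 N) : Prop :=
  Tendsto (fun k => eLpNorm (fun x => (v k).u (x + xs k) - U.u x) 2
      (volume : Measure (Esp N))) atTop (nhds 0) ∧
  (∀ i, Tendsto (fun k => eLpNorm (fun x => (v k).grad i (x + xs k) - U.grad i x) 2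
      (volume : Measure (Esp N))) atTop (nhds 0)) ∧
  Tendsto (fun k => eLpNorm (fun x => (v k).lapl (x + xs k) - U.lapl x) 2
      (volume : Measure (Esp N))) atTop (nhds 0)

/-- `u` is a weak (`H^{-2}`) solution of `Δ²u + 2Δu + (1+c)u - |u|^{2σ}u = 0`. -/
def SolvesSW {N : ℕ} (σ c : ℝ) (U : H2 N) : Prop :=
  ∀ φ : Esp N → ℂ, TestFun φ →
    (∫ x, U.lapl x * lapC φ x) + 2 * (∫ x, U.lapl x * φ x) +
        ((1 + c : ℝ) : ℂ) * (∫ x, U.u x * φ x) -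
        (∫ x, ((‖U.u x‖ ^ (2 * σ) : ℝ) : ℂ) * U.u x * φ x) = 0

/-- `T_c(u) = ∫|Δu|² - 2∫|∇u|² + (1+c)∫|u|²`. -/
def Tfun {N : ℕ} (c : ℝ) (U : H2 N) : ℝ := U.lapSq - 2 * U.gradSq + (1 + c) * U.massSq

/-- `t(c) = inf {T_c(u) : ∫|u|^{2σ+2} = 1}`. -/
def tmin (N : ℕ) (σ c : ℝ) : ℝ := sInf {r : ℝ | ∃ U : H2 N, U.pPow σ = 1 ∧ r = Tfun c U}

/-- The action `S_c(u) = E(u) + (1+c)‖u‖_{L²}² = T_c(u) - (1/(σ+1))∫|u|^{2σ+2}`. -/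
def action {N : ℕ} (σ c : ℝ) (U : H2 N) : ℝ := U.energy σ + (1 + c) * U.massSq

section
open scoped FourierTransform SchwartzMap LineDeriv ContDiff

lemma mult_formula {N : ℕ} (f : Lp (α := Esp N) ℂ 2) (ψ : 𝓢(Esp N, ℂ)) :
    ∫ x, (𝓕 f : Lp (α := Esp N) ℂ 2) x * ψ x = ∫ x, f x * (𝓕 ψ) x := by
  have h := Lp.fourier_toTemperedDistribution_eq f
  have h2 := congrArg (fun T => T ψ) h
  simp only [TemperedDistribution.fourier_apply, Lp.toTemperedDistribution_apply, smul_eq_mul] at h2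
  calc _ = _ := integral_congr_ae (ae_of_all _ fun x => mul_comm _ _)
    _ = _ := h2.symm
    _ = _ := integral_congr_ae (ae_of_all _ fun x => mul_comm _ _)

lemma mult_formula_inv {N : ℕ} (f : Lp (α := Esp N) ℂ 2) (ψ : 𝓢(Esp N, ℂ)) :
    ∫ x, (𝓕⁻ f : Lp (α := Esp N) ℂ 2) x * ψ x = ∫ x, f x * (𝓕⁻ ψ) x := by
  have h := Lp.fourierInv_toTemperedDistribution_eq f
  have h2 := congrArg (fun T => T ψ) h
  simp only [TemperedDistribution.fourierInv_apply, Lp.toTemperedDistribution_apply, smul_eq_mul] at h2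
  calc _ = _ := integral_congr_ae (ae_of_all _ fun x => mul_comm _ _)
    _ = _ := h2.symm
    _ = _ := integral_congr_ae (ae_of_all _ fun x => mul_comm _ _)

lemma pderivC_schwartz {N : ℕ} (i : Fin N) (ψ : 𝓢(Esp N, ℂ)) :
    pderivC i ψ = (∂_{EuclideanSpace.single i (1:ℝ)} ψ : 𝓢(Esp N, ℂ)) := by
  ext x
  rw [SchwartzMap.lineDerivOp_apply_eq_fderiv]; rfl

lemma pderivC_norm_le {N : ℕ} (i : Fin N) (φ : Esp N → ℂ) (x : Esp N) :
    ‖pderivC i φ x‖ ≤ ‖fderiv ℝ φ x‖ := by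
  refine ((fderiv ℝ φ x).le_opNorm _).trans ?_
  simp

lemma memLp_mul_int {N : ℕ} {f g : Esp N → ℂ} (hf : MemLp f 2) (hg : MemLp g 2) :
    Integrable (fun x => f x * g x) := by
  exact hf.integrable_mul hg

def bumpC (N : ℕ) : ContDiffBump (0 : Esp N) := ⟨1, 2, by norm_num, by norm_num⟩

def cutS {N : ℕ} (ψ : 𝓢(Esp N, ℂ)) (n : ℕ) : Esp N → ℂ :=
  fun x => (bumpC N ((n + 1 : ℝ)⁻¹ • x)) • ψ x

lemma cutS_test {N : ℕ} (ψ : 𝓢(Esp N, ℂ)) (n : ℕ) : TestFun (cutS ψ n) := by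
  constructor
  · unfold cutS
    have h1 : ContDiff ℝ (⊤ : ℕ∞) (fun x : Esp N => bumpC N ((n + 1 : ℝ)⁻¹ • x)) :=
      (bumpC N).contDiff.comp (contDiff_const_smul ((n + 1 : ℝ)⁻¹))
    exact h1.smul (ψ.smooth _)
  · unfold cutS
    refine HasCompactSupport.smul_right (f := fun x => bumpC N ((n + 1 : ℝ)⁻¹ • x)) ?_
    exact (bumpC N).hasCompactSupport.comp_smul (by positivity)

lemma cutS_ev {N : ℕ} (ψ : 𝓢(Esp N, ℂ)) (x : Esp N) :
    ∀ᶠ n : ℕ in atTop, cutS ψ n =ᶠ[𝓝 x] ψ := by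
  obtain ⟨n0, hn0⟩ := exists_nat_gt ‖x‖
  filter_upwards [eventually_ge_atTop n0] with n hn
  have : ∀ᶠ y in 𝓝 x, ‖y‖ < n + 1 := by
    refine (continuous_norm.tendsto x).eventually_lt_const ?_
    have : (n0:ℝ) ≤ n := by exact_mod_cast hn
    linarith
  filter_upwards [this] with y hy
  have h1 : bumpC N ((n + 1 : ℝ)⁻¹ • y) = 1 := by
    apply (bumpC N).one_of_mem_closedBall
    have hp : (0:ℝ) < n + 1 := by positivity
    simp only [mem_closedBall_zero_iff, norm_smul, norm_inv, Real.norm_eq_abs, abs_of_pos hp]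
    rw [inv_mul_le_iff₀ hp]; simp [bumpC]; exact hy.le
  simp [cutS, h1]

lemma cutS_bound (N : ℕ) : ∃ C : ℝ, 0 ≤ C ∧ ∀ (ψ : 𝓢(Esp N, ℂ)) (n : ℕ) (x : Esp N),
    ‖cutS ψ n x‖ ≤ ‖ψ x‖ ∧ ‖fderiv ℝ (cutS ψ n) x‖ ≤ C * ‖ψ x‖ + ‖fderiv ℝ ψ x‖ := by
  have hc : Continuous (fderiv ℝ (bumpC N)) := ((bumpC N).contDiff (n := 1)).continuous_fderiv (by norm_num)
  obtain ⟨C, hC⟩ := ((bumpC N).hasCompactSupport.fderiv (𝕜 := ℝ)).exists_bound_of_continuous hc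
  have hC0 : 0 ≤ C := (norm_nonneg _).trans (hC 0)
  refine ⟨C, hC0, fun ψ n x => ?_⟩
  have hb : ∀ y, ‖bumpC N y‖ ≤ 1 := fun y => by
    rw [Real.norm_eq_abs, abs_of_nonneg (bumpC N).nonneg]; exact (bumpC N).le_one
  have hp : (0:ℝ) < n + 1 := by positivity
  constructor
  · unfold cutS
    rw [norm_smul]
    calc _ ≤ 1 * ‖ψ x‖ := by gcongr; exact hb _
      _ = _ := one_mul _
  · have h1 : HasFDerivAt (fun y : Esp N => bumpC N ((n + 1 : ℝ)⁻¹ • y))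
        ((fderiv ℝ (bumpC N) ((n + 1 : ℝ)⁻¹ • x)).comp ((n + 1 : ℝ)⁻¹ • ContinuousLinearMap.id ℝ (Esp N))) x := by
      refine HasFDerivAt.comp (g := (bumpC N : Esp N → ℝ)) (f := fun y : Esp N => (n + 1 : ℝ)⁻¹ • y) x
        (((bumpC N).contDiff (n := 1)).differentiable (by norm_num) _).hasFDerivAt ?_
      exact (hasFDerivAt_id x).const_smul ((n + 1 : ℝ)⁻¹)
    have h2 := h1.smul (ψ.differentiable x).hasFDerivAt
    have h3 : fderiv ℝ (cutS ψ n) x = _ := h2.fderiv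
    rw [h3, add_comm]
    refine (norm_add_le _ _).trans (add_le_add ?_ ?_)
    · refine (ContinuousLinearMap.norm_smulRight_apply _ _).le.trans ?_
      gcongr
      refine (ContinuousLinearMap.opNorm_comp_le _ _).trans ?_
      have : ‖(n + 1 : ℝ)⁻¹ • ContinuousLinearMap.id ℝ (Esp N)‖ ≤ 1 := by
        rw [norm_smul]
        calc _ ≤ (1:ℝ) * 1 := by
              gcongr
              · rw [norm_inv, Real.norm_eq_abs, abs_of_pos hp]
                apply inv_le_one_of_one_le₀; linarith [n.cast_nonneg (α := ℝ)]
              · exact ContinuousLinearMap.norm_id_le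
          _ = 1 := one_mul _
      calc _ ≤ C * 1 := by gcongr; exact hC _
        _ = C := mul_one _
    · rw [norm_smul]
      calc _ ≤ 1 * ‖fderiv ℝ ψ x‖ := by gcongr; exact hb _
        _ = _ := one_mul _

lemma schwartz_ext {N : ℕ} {s : Finset (Fin N)} {w : Fin N → Esp N → ℂ} {v : Esp N → ℂ}
    (hw : ∀ i, MemLp (w i) 2) (hv : MemLp v 2)
    (h : ∀ φ, TestFun φ → ∑ i ∈ s, ∫ x, w i x * pderivC i φ x = - ∫ x, v x * φ x)
    (ψ : 𝓢(Esp N, ℂ)) : ∑ i ∈ s, ∫ x, w i x * pderivC i ψ x = - ∫ x, v x * ψ x := by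
  obtain ⟨C, hC0, hC⟩ := cutS_bound N
  have t1 : Tendsto (fun n => ∑ i ∈ s, ∫ x, w i x * pderivC i (cutS ψ n) x) atTop
      (𝓝 (∑ i ∈ s, ∫ x, w i x * pderivC i ψ x)) := by
    refine tendsto_finsetSum _ fun i _ => ?_
    have hd : MemLp (fun x => ‖fderiv ℝ ψ x‖) 2 := by
      have := (SchwartzMap.fderivCLM ℝ (Esp N) ℂ ψ).memLp 2 (volume : Measure (Esp N))
      exact this.norm
    have hψ : MemLp (fun x => ‖ψ x‖) 2 := (ψ.memLp 2 (volume : Measure (Esp N))).norm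
    have hB : MemLp (fun x => C * ‖ψ x‖ + ‖fderiv ℝ ψ x‖) 2 := (hψ.const_mul C).add hd
    refine tendsto_integral_of_dominated_convergence
      (fun x => ‖w i x‖ * (C * ‖ψ x‖ + ‖fderiv ℝ ψ x‖)) ?_ ?_ ?_ ?_
    · intro n
      refine (hw i).aestronglyMeasurable.mul ?_
      have : Continuous (pderivC i (cutS ψ n)) := by
        have := ((cutS_test ψ n).1.continuous_fderiv (by simp))
        exact this.clm_apply continuous_const
      exact this.aestronglyMeasurable
    · exact (hw i).norm.integrable_mul hB
    · intro n
      refine ae_of_all _ fun x => ?_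
      rw [norm_mul]
      gcongr
      exact (pderivC_norm_le _ _ _).trans (hC ψ n x).2
    · refine ae_of_all _ fun x => ?_
      refine tendsto_const_nhds.congr' ?_
      filter_upwards [cutS_ev ψ x] with n hn
      simp only [pderivC, hn.fderiv_eq]
  have t2 : Tendsto (fun n => - ∫ x, v x * cutS ψ n x) atTop (𝓝 (- ∫ x, v x * ψ x)) := by
    refine Tendsto.neg ?_
    refine tendsto_integral_of_dominated_convergence (fun x => ‖v x‖ * ‖ψ x‖) ?_ ?_ ?_ ?_
    · intro n
      exact hv.aestronglyMeasurable.mul (cutS_test ψ n).1.continuous.aestronglyMeasurable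
    · exact hv.norm.integrable_mul (ψ.memLp 2 (volume : Measure (Esp N))).norm
    · intro n
      refine ae_of_all _ fun x => ?_
      rw [norm_mul]
      gcongr
      exact (hC ψ n x).1
    · refine ae_of_all _ fun x => ?_
      refine tendsto_const_nhds.congr' ?_
      filter_upwards [cutS_ev ψ x] with n hn
      rw [hn.eq_of_nhds]
  refine tendsto_nhds_unique t1 (t2.congr fun n => ?_)
  exact (h _ (cutS_test ψ n)).symm

end

section
open scoped FourierTransform SchwartzMap LineDeriv ContDiff

/-- Fourier symbol of the `i`-th derivative. -/
def sym {N : ℕ} (i : Fin N) (ξ : Esp N) : ℂ := 2 * Real.pi * Complex.I * (ξ i : ℂ)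

lemma sym_cont {N : ℕ} (i : Fin N) : Continuous (sym (N := N) i) := by
  unfold sym; fun_prop

lemma lineDeriv_F {N : ℕ} (i : Fin N) (ψ : 𝓢(Esp N, ℂ)) : ∃ Ψ : 𝓢(Esp N, ℂ),
    (∀ ξ, Ψ ξ = - sym i ξ * ψ ξ) ∧ pderivC i (𝓕 ψ : 𝓢(Esp N, ℂ)) = (𝓕 Ψ : 𝓢(Esp N, ℂ)) := by
  refine ⟨-(2 * Real.pi * Complex.I) • SchwartzMap.smulLeftCLM ℂ (inner ℝ · (EuclideanSpace.single i (1:ℝ))) ψ, ?_, ?_⟩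
  · intro ξ
    have : (fun x : Esp N => inner ℝ x (EuclideanSpace.single i (1:ℝ))).HasTemperateGrowth := by fun_prop
    simp only [neg_apply, neg_smul, smul_apply, SchwartzMap.smulLeftCLM_apply_apply this]
    simp [sym, EuclideanSpace.inner_single_right]
    ring
  · rw [pderivC_schwartz, SchwartzMap.lineDerivOp_fourier_eq]

lemma lineDeriv_Finv {N : ℕ} (i : Fin N) (ψ : 𝓢(Esp N, ℂ)) : ∀ ξ, 
    (𝓕⁻ (∂_{EuclideanSpace.single i (1:ℝ)} ψ) : 𝓢(Esp N, ℂ)) ξ = - sym i ξ * (𝓕⁻ ψ) ξ := by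
  intro ξ
  rw [SchwartzMap.fourierInv_lineDerivOp_eq]
  have : (fun x : Esp N => inner ℝ x (EuclideanSpace.single i (1:ℝ))).HasTemperateGrowth := by fun_prop
  simp only [neg_apply, neg_smul, smul_apply, SchwartzMap.smulLeftCLM_apply_apply this]
  simp [sym, EuclideanSpace.inner_single_right]
  ring

lemma ae_zero_of_test {N : ℕ} {f : Esp N → ℂ} (hf : LocallyIntegrable f)
    (h : ∀ ψ : 𝓢(Esp N, ℂ), HasCompactSupport ψ → ∫ x, f x * ψ x = 0) : ∀ᵐ x, f x = 0 := by
  refine ae_eq_zero_of_integral_contDiff_smul_eq_zero hf fun g hg hgc => ?_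
  have h1 : ContDiff ℝ ∞ (fun x => (g x : ℂ)) := Complex.ofRealCLM.contDiff.comp hg
  have h2 : HasCompactSupport (fun x => (g x : ℂ)) := hgc.comp_left (g := fun r : ℝ => (r:ℂ)) (by simp)
  have := h (h2.toSchwartzMap h1) h2
  rw [← this]
  refine integral_congr_ae (ae_of_all _ fun x => ?_)
  simp [mul_comm]

lemma sym_mul_locInt {N : ℕ} (i : Fin N) {f : Esp N → ℂ} (hf : LocallyIntegrable f) :
    LocallyIntegrable (fun x => sym i x * f x) := by
  have := (locallyIntegrableOn_univ.2 hf).continuousOn_mul (sym_cont i).continuousOn isOpen_univ.isLocallyClosed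
  exact locallyIntegrableOn_univ.1 this

lemma memLp_locInt {N : ℕ} {f : Esp N → ℂ} (hf : MemLp f 2) : LocallyIntegrable f :=
  hf.locallyIntegrable (by norm_num)

lemma weak_fourier {N : ℕ} {s : Finset (Fin N)} {w : Fin N → Esp N → ℂ} {v : Esp N → ℂ}
    (hw : ∀ i, MemLp (w i) 2) (hv : MemLp v 2)
    (h : ∀ φ, TestFun φ → ∑ i ∈ s, ∫ x, w i x * pderivC i φ x = - ∫ x, v x * φ x) :
    ∀ᵐ ξ, (𝓕 (hv.toLp v) : Lp ℂ 2 (volume : Measure (Esp N))) ξ =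
      ∑ i ∈ s, sym i ξ * (𝓕 ((hw i).toLp (w i)) : Lp ℂ 2 (volume : Measure (Esp N))) ξ := by
  set Fv := (𝓕 (hv.toLp v) : Lp ℂ 2 (volume : Measure (Esp N)))
  set Fw := fun i => (𝓕 ((hw i).toLp (w i)) : Lp ℂ 2 (volume : Measure (Esp N)))
  have hl1 := memLp_locInt (Lp.memLp Fv)
  have hl2 := fun i => sym_mul_locInt i (memLp_locInt (Lp.memLp (Fw i)))
  have hl3 : LocallyIntegrable (fun ξ => ∑ i ∈ s, sym i ξ * Fw i ξ) := by
    exact locallyIntegrable_finsetSum s (f := fun i ξ => sym i ξ * Fw i ξ) fun i _ => hl2 i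
  have key : ∀ᵐ ξ, Fv ξ - ∑ i ∈ s, sym i ξ * Fw i ξ = 0 := by
    refine ae_zero_of_test (hl1.sub hl3) fun ψ hψ => ?_
    choose Ψ hΨ hΨ2 using fun i => lineDeriv_F i ψ
    have e1 : ∫ x, Fv x * ψ x = ∑ i ∈ s, ∫ x, Fw i x * (sym i x * ψ x) := by
      have e0 : ∫ x, Fv x * ψ x = ∫ x, v x * (𝓕 ψ : 𝓢(Esp N, ℂ)) x := by
        rw [mult_formula]
        refine integral_congr_ae ?_
        filter_upwards [hv.coeFn_toLp] with x hx
        rw [hx]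
      have e2 := schwartz_ext hw hv h (𝓕 ψ)
      rw [e0, ← neg_neg (∫ x, v x * _), ← e2, ← Finset.sum_neg_distrib]
      refine Finset.sum_congr rfl fun i _ => ?_
      rw [hΨ2 i]
      have e3 : ∫ x, w i x * (𝓕 (Ψ i) : 𝓢(Esp N, ℂ)) x = ∫ x, Fw i x * Ψ i x := by
        rw [mult_formula]
        refine integral_congr_ae ?_
        filter_upwards [(hw i).coeFn_toLp] with x hx
        rw [hx]
      rw [e3, ← integral_neg]
      refine integral_congr_ae (ae_of_all _ fun x => ?_)
      simp only [hΨ]; ring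
    have i1 : Integrable (fun x => Fv x * ψ x) := memLp_mul_int (Lp.memLp Fv) (ψ.memLp 2)
    have i2 : ∀ i, Integrable (fun x => Fw i x * (sym i x * ψ x)) := by
      intro i
      have := memLp_mul_int (Lp.memLp (Fw i)) ((Ψ i).memLp 2)
      refine this.neg.congr (ae_of_all _ fun x => ?_)
      simp [hΨ]
    have : ∀ x, (Fv x - ∑ i ∈ s, sym i x * Fw i x) * ψ x = Fv x * ψ x - ∑ i ∈ s, Fw i x * (sym i x * ψ x) := by
      intro x
      rw [sub_mul, Finset.sum_mul]
      congr 1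
      refine Finset.sum_congr rfl fun i _ => by ring
    simp_rw [this]
    rw [integral_sub i1 (integrable_finsetSum _ fun i _ => i2 i), integral_finsetSum _ fun i _ => i2 i, e1, sub_self]
  filter_upwards [key] with ξ hξ
  exact sub_eq_zero.1 hξ

lemma pderivC_test {N : ℕ} (i : Fin N) {φ : Esp N → ℂ} (h : TestFun φ) : TestFun (pderivC i φ) := by
  constructor
  · have := h.1.fderiv_right (m := (⊤ : ℕ∞)) (by simp)
    exact this.clm_apply contDiff_const
  · exact (h.2.fderiv (𝕜 := ℝ)).comp_left (g := fun L : Esp N →L[ℝ] ℂ => L (EuclideanSpace.single i 1)) (by simp)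

lemma test_memLp {N : ℕ} {φ : Esp N → ℂ} (h : TestFun φ) (p : ENNReal) : MemLp φ p :=
  h.1.continuous.memLp_of_hasCompactSupport h.2

def kk {N : ℕ} (ξ : Esp N) : ℝ := 4 * Real.pi ^ 2 * ‖ξ‖ ^ 2

lemma sum_sym_sq {N : ℕ} (ξ : Esp N) : ∑ i, sym i ξ * sym i ξ = - (kk ξ : ℂ) := by
  simp only [sym, kk, EuclideanSpace.norm_sq_eq, Real.norm_eq_abs, sq_abs]
  push_cast
  rw [Finset.mul_sum, ← Finset.sum_neg_distrib]
  refine Finset.sum_congr rfl fun i _ => ?_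
  linear_combination (4 * (Real.pi:ℂ)^2 * (ξ i : ℂ)^2) * Complex.I_sq

lemma sum_sym_norm {N : ℕ} (ξ : Esp N) : ∑ i, ‖sym i ξ‖ ^ 2 = kk ξ := by
  simp only [sym, kk, EuclideanSpace.norm_sq_eq, Real.norm_eq_abs, sq_abs]
  rw [Finset.mul_sum]
  refine Finset.sum_congr rfl fun i _ => ?_
  simp only [norm_mul, Complex.norm_real, Complex.norm_I, Complex.norm_ofNat, mul_pow, Real.norm_eq_abs, sq_abs]
  ring

lemma plancherel {N : ℕ} {f : Esp N → ℂ} (hf : MemLp f 2) :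
    ∫ ξ, ‖(𝓕 (hf.toLp f) : Lp ℂ 2 (volume : Measure (Esp N))) ξ‖ ^ 2 = ∫ x, ‖f x‖ ^ 2 := by
  have h := Lp.inner_fourier_eq (hf.toLp f) (hf.toLp f)
  rw [L2.inner_def, L2.inner_def] at h
  simp only [inner_self_eq_norm_sq_to_K] at h
  have h2 : ∫ ξ, ‖(𝓕 (hf.toLp f) : Lp ℂ 2 (volume : Measure (Esp N))) ξ‖ ^ 2 = ∫ x, ‖(hf.toLp f) x‖ ^ 2 := by
    exact_mod_cast h
  rw [h2]
  refine integral_congr_ae ?_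
  filter_upwards [hf.coeFn_toLp] with x hx
  rw [hx]

end

section
open scoped FourierTransform SchwartzMap LineDeriv ContDiff

lemma finv_bdd {N : ℕ} {f : Esp N → ℂ} (hf : MemLp f 2) (hi : Integrable f) :
    ∀ᵐ x, ‖(𝓕⁻ (hf.toLp f) : Lp ℂ 2 (volume : Measure (Esp N))) x‖ ≤ ∫ x, ‖f x‖ := by
  set G : Esp N → ℂ := VectorFourier.fourierIntegral Real.fourierChar volume (-innerₗ (Esp N)) f
  have hL : Continuous fun p : Esp N × Esp N => (-innerₗ (Esp N)) p.1 p.2 := by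
    have : (fun p : Esp N × Esp N => (-innerₗ (Esp N)) p.1 p.2) = fun p => - inner ℝ p.1 p.2 := by
      ext p; simp
    rw [this]; fun_prop
  have hGc : Continuous G := VectorFourier.fourierIntegral_continuous Real.continuous_fourierChar hL hi
  set F := (𝓕⁻ (hf.toLp f) : Lp ℂ 2 (volume : Measure (Esp N)))
  have key : ∀ᵐ x, F x - G x = 0 := by
    refine ae_zero_of_test ((memLp_locInt (Lp.memLp F)).sub hGc.locallyIntegrable) fun ψ hψ => ?_
    have e1 : ∫ x, F x * ψ x = ∫ x, f x * (𝓕⁻ ψ) x := by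
      rw [mult_formula_inv]
      refine integral_congr_ae ?_
      filter_upwards [hf.coeFn_toLp] with x hx
      rw [hx]
    have e2 := VectorFourier.integral_fourierIntegral_smul_eq_flip (L := -innerₗ (Esp N))
      Real.continuous_fourierChar hL hi (ψ.integrable (μ := volume))
    have e3 : ∀ x, (𝓕⁻ ψ) x = VectorFourier.fourierIntegral Real.fourierChar volume (-innerₗ (Esp N)).flip ψ x := by
      intro x
      rw [SchwartzMap.fourierInv_coe, Real.fourierInv_eq]
      simp [VectorFourier.fourierIntegral, real_inner_comm]
    have i1 : Integrable (fun x => F x * ψ x) := memLp_mul_int (Lp.memLp F) (ψ.memLp 2)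
    have i2 : Integrable (fun x => G x * ψ x) := 
      (hGc.mul ψ.continuous).integrable_of_hasCompactSupport hψ.mul_left
    simp_rw [sub_mul]
    rw [integral_sub i1 i2, e1]
    simp only [smul_eq_mul] at e2
    simp_rw [e3]
    rw [← e2, sub_self]
  filter_upwards [key] with x hx
  rw [sub_eq_zero.1 hx]
  exact VectorFourier.norm_fourierIntegral_le_integral_norm _ _ _ _ _

namespace H2
variable {N : ℕ}

def hat (U : H2 N) : Lp ℂ 2 (volume : Measure (Esp N)) := 𝓕 (U.u_mem.toLp U.u)

lemma hat_grad (U : H2 N) (i : Fin N) :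
    ∀ᵐ ξ, (𝓕 ((U.grad_mem i).toLp (U.grad i)) : Lp ℂ 2 (volume : Measure (Esp N))) ξ = sym i ξ * U.hat ξ := by
  have := weak_fourier (s := {i}) (w := fun _ => U.u) (fun _ => U.u_mem) (U.grad_mem i)
    (fun φ hφ => by simpa using U.grad_spec i φ hφ)
  filter_upwards [this] with ξ hξ
  simpa [hat] using hξ

lemma lap_weak (U : H2 N) {φ : Esp N → ℂ} (hφ : TestFun φ) :
    ∑ i, ∫ x, U.grad i x * pderivC i φ x = - ∫ x, U.lapl x * φ x := by
  rw [← U.lapl_spec φ hφ]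
  have : ∀ x, U.u x * lapC φ x = ∑ i, U.u x * pderivC i (pderivC i φ) x := by
    intro x; rw [lapC, Finset.mul_sum]
  simp_rw [this]
  rw [integral_finsetSum _ fun i _ => memLp_mul_int U.u_mem (test_memLp (pderivC_test i (pderivC_test i hφ)) 2),
    ← Finset.sum_neg_distrib]
  refine Finset.sum_congr rfl fun i _ => ?_
  rw [U.grad_spec i _ (pderivC_test i hφ), neg_neg]

lemma hat_lap (U : H2 N) :
    ∀ᵐ ξ, (𝓕 (U.lapl_mem.toLp U.lapl) : Lp ℂ 2 (volume : Measure (Esp N))) ξ = - (kk ξ : ℂ) * U.hat ξ := by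
  have := weak_fourier (s := Finset.univ) (w := U.grad) (U.grad_mem) (U.lapl_mem)
    (fun φ hφ => U.lap_weak hφ)
  have h2 := ae_all_iff.2 U.hat_grad
  filter_upwards [this, h2] with ξ hξ h2
  rw [hξ, ← sum_sym_sq, Finset.sum_mul]
  refine Finset.sum_congr rfl fun i _ => ?_
  rw [h2]; ring

lemma int_sq_of_memLp {f : Esp N → ℂ} (hf : MemLp f 2) : Integrable (fun x => ‖f x‖ ^ 2) := by
  have := hf.norm.integrable_sq
  exact this

lemma mass_hat (U : H2 N) : U.massSq = ∫ ξ, ‖U.hat ξ‖ ^ 2 := (plancherel U.u_mem).symm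

lemma int_mass (U : H2 N) : Integrable (fun ξ => ‖U.hat ξ‖ ^ 2) := int_sq_of_memLp (Lp.memLp _)

lemma kk_nonneg (ξ : Esp N) : 0 ≤ kk ξ := by unfold kk; positivity

lemma lap_ae (U : H2 N) : (fun ξ => ‖(𝓕 (U.lapl_mem.toLp U.lapl) : Lp ℂ 2 (volume : Measure (Esp N))) ξ‖ ^ 2)
    =ᵐ[volume] fun ξ => kk ξ ^ 2 * ‖U.hat ξ‖ ^ 2 := by
  filter_upwards [U.hat_lap] with ξ hξ
  simp [hξ, mul_pow]

lemma lap_hat (U : H2 N) : U.lapSq = ∫ ξ, kk ξ ^ 2 * ‖U.hat ξ‖ ^ 2 := by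
  rw [← integral_congr_ae U.lap_ae]
  exact (plancherel U.lapl_mem).symm

lemma int_lap (U : H2 N) : Integrable (fun ξ => kk ξ ^ 2 * ‖U.hat ξ‖ ^ 2) :=
  (int_sq_of_memLp (Lp.memLp _)).congr U.lap_ae

lemma grad_ae (U : H2 N) (i : Fin N) :
    (fun ξ => ‖(𝓕 ((U.grad_mem i).toLp (U.grad i)) : Lp ℂ 2 (volume : Measure (Esp N))) ξ‖ ^ 2)
    =ᵐ[volume] fun ξ => ‖sym i ξ‖ ^ 2 * ‖U.hat ξ‖ ^ 2 := by
  filter_upwards [U.hat_grad i] with ξ hξ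
  simp [hξ, mul_pow]

lemma int_grad_i (U : H2 N) (i : Fin N) : Integrable (fun ξ => ‖sym i ξ‖ ^ 2 * ‖U.hat ξ‖ ^ 2) :=
  (int_sq_of_memLp (Lp.memLp _)).congr (U.grad_ae i)

lemma int_grad (U : H2 N) : Integrable (fun ξ => kk ξ * ‖U.hat ξ‖ ^ 2) := by
  have := integrable_finsetSum Finset.univ fun i _ => U.int_grad_i i
  refine this.congr (ae_of_all _ fun ξ => ?_)
  simp only
  rw [← sum_sym_norm, Finset.sum_mul]

lemma grad_hat (U : H2 N) : U.gradSq = ∫ ξ, kk ξ * ‖U.hat ξ‖ ^ 2 := by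
  have : ∀ ξ, kk ξ * ‖U.hat ξ‖ ^ 2 = ∑ i, ‖sym i ξ‖ ^ 2 * ‖U.hat ξ‖ ^ 2 := fun ξ => by
    rw [← sum_sym_norm, Finset.sum_mul]
  simp_rw [this]
  rw [integral_finsetSum _ fun i _ => U.int_grad_i i]
  refine Finset.sum_congr rfl fun i _ => ?_
  rw [← integral_congr_ae (U.grad_ae i)]
  exact (plancherel (U.grad_mem i)).symm

lemma sym_le (i : Fin N) (ξ : Esp N) : ‖sym i ξ‖ ≤ 1 + kk ξ := by
  have h : ‖sym i ξ‖ ^ 2 ≤ kk ξ := by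
    rw [← sum_sym_norm]
    exact Finset.single_le_sum (f := fun i => ‖sym i ξ‖ ^ 2) (fun _ _ => by positivity) (Finset.mem_univ i)
  nlinarith [sq_nonneg (‖sym i ξ‖ - 1), norm_nonneg (sym i ξ)]

lemma kk_cont : Continuous (kk (N := N)) := by unfold kk; fun_prop

lemma sym_memLp {f : Esp N → ℂ} (hf : MemLp f 2) (hk : MemLp (fun ξ => (kk ξ : ℂ) * f ξ) 2) (i : Fin N) :
    MemLp (fun ξ => sym i ξ * f ξ) 2 := by
  refine MemLp.of_le (g := fun ξ => ‖f ξ‖ + ‖(kk ξ : ℂ) * f ξ‖) (hf.norm.add hk.norm) 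
    ((sym_cont i).aestronglyMeasurable.mul hf.aestronglyMeasurable) (ae_of_all _ fun ξ => ?_)
  rw [Real.norm_of_nonneg (by positivity), norm_mul, norm_mul, Complex.norm_real, Real.norm_of_nonneg (kk_nonneg ξ)]
  nlinarith [sym_le i ξ, norm_nonneg (f ξ)]

lemma finv_weak {f : Esp N → ℂ} (hf : MemLp f 2) (i : Fin N) (hs : MemLp (fun ξ => sym i ξ * f ξ) 2)
    {φ : Esp N → ℂ} (hφ : TestFun φ) :
    ∫ x, (𝓕⁻ (hf.toLp f) : Lp ℂ 2 (volume : Measure (Esp N))) x * pderivC i φ x = 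
     - ∫ x, (𝓕⁻ (hs.toLp _) : Lp ℂ 2 (volume : Measure (Esp N))) x * φ x := by
  set ψ : 𝓢(Esp N, ℂ) := hφ.2.toSchwartzMap hφ.1
  have hψ : φ = ψ := rfl
  rw [hψ, pderivC_schwartz, mult_formula_inv, mult_formula_inv, ← integral_neg]
  refine integral_congr_ae ?_
  filter_upwards [hf.coeFn_toLp, hs.coeFn_toLp] with x h1 h2
  rw [h1, h2, lineDeriv_Finv]; ring

lemma lap_memLp_sum {f : Esp N → ℂ} (hf : MemLp f 2) (hk : MemLp (fun ξ => (kk ξ : ℂ) * f ξ) 2) (i : Fin N) :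
    MemLp (fun ξ => sym i ξ * (sym i ξ * f ξ)) 2 := by
  refine MemLp.of_le (g := fun ξ => ‖(kk ξ : ℂ) * f ξ‖) hk.norm
    ((sym_cont i).aestronglyMeasurable.mul ((sym_cont i).aestronglyMeasurable.mul hf.aestronglyMeasurable)) (ae_of_all _ fun ξ => ?_)
  have h : ‖sym i ξ‖ ^ 2 ≤ kk ξ := by
    rw [← sum_sym_norm]
    exact Finset.single_le_sum (f := fun i => ‖sym i ξ‖ ^ 2) (fun _ _ => by positivity) (Finset.mem_univ i)
  rw [Real.norm_of_nonneg (by positivity), norm_mul, norm_mul, norm_mul, Complex.norm_real, Real.norm_of_nonneg (kk_nonneg ξ)]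
  nlinarith [norm_nonneg (f ξ)]

def ofHat (f : Esp N → ℂ) (hf : MemLp f 2) (hk : MemLp (fun ξ => (kk ξ : ℂ) * f ξ) 2) : H2 N where
  u := (𝓕⁻ (hf.toLp f) : Lp ℂ 2 (volume : Measure (Esp N)))
  grad i := (𝓕⁻ ((sym_memLp hf hk i).toLp _) : Lp ℂ 2 (volume : Measure (Esp N)))
  lapl x := ∑ i, (𝓕⁻ ((lap_memLp_sum hf hk i).toLp _) : Lp ℂ 2 (volume : Measure (Esp N))) x
  u_mem := Lp.memLp _
  grad_mem i := Lp.memLp _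
  lapl_mem := memLp_finsetSum _ fun i _ => Lp.memLp _
  grad_spec i φ hφ := finv_weak hf i _ hφ
  lapl_spec φ hφ := by
    have : ∀ x, (𝓕⁻ (hf.toLp f) : Lp ℂ 2 (volume : Measure (Esp N))) x * lapC φ x
      = ∑ i, (𝓕⁻ (hf.toLp f) : Lp ℂ 2 (volume : Measure (Esp N))) x * pderivC i (pderivC i φ) x := by
      intro x; rw [lapC, Finset.mul_sum]
    simp_rw [this, Finset.sum_mul]
    rw [integral_finsetSum _ fun i _ => memLp_mul_int (Lp.memLp _) (test_memLp (pderivC_test i (pderivC_test i hφ)) 2),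
      integral_finsetSum _ fun i _ => memLp_mul_int (Lp.memLp _) (test_memLp hφ 2)]
    refine Finset.sum_congr rfl fun i _ => ?_
    rw [finv_weak hf i (sym_memLp hf hk i) (pderivC_test i hφ),
      finv_weak (sym_memLp hf hk i) i (lap_memLp_sum hf hk i) hφ, neg_neg]

lemma hat_ofHat (f : Esp N → ℂ) (hf : MemLp f 2) (hk : MemLp (fun ξ => (kk ξ : ℂ) * f ξ) 2) :
    (ofHat f hf hk).hat =ᵐ[volume] f := by
  have : (ofHat f hf hk).hat = hf.toLp f := by
    unfold hat
    have : (ofHat f hf hk).u_mem.toLp (ofHat f hf hk).u = 𝓕⁻ (hf.toLp f) := Lp.toLp_coeFn _ _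
    rw [this]
    exact FourierTransform.fourier_fourierInv_eq _
  rw [this]
  exact hf.coeFn_toLp

end H2

end

section
open scoped FourierTransform SchwartzMap LineDeriv ContDiff

namespace H2
variable {N : ℕ}

lemma massSq_nonneg (U : H2 N) : 0 ≤ U.massSq := integral_nonneg fun _ => by positivity
lemma lapSq_nonneg (U : H2 N) : 0 ≤ U.lapSq := integral_nonneg fun _ => by positivity
lemma gradSq_nonneg (U : H2 N) : 0 ≤ U.gradSq := 
  Finset.sum_nonneg fun _ _ => integral_nonneg fun _ => by positivity
lemma pPow_nonneg (σ : ℝ) (U : H2 N) : 0 ≤ U.pPow σ := integral_nonneg fun _ => by positivity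

lemma two_grad_le (U : H2 N) {ε : ℝ} (hε : 0 < ε) : 2 * U.gradSq ≤ ε * U.lapSq + ε⁻¹ * U.massSq := by
  rw [grad_hat, lap_hat, mass_hat, ← integral_const_mul, ← integral_const_mul, ← integral_const_mul,
    ← integral_add (U.int_lap.const_mul _) (U.int_mass.const_mul _)]
  refine integral_mono (U.int_grad.const_mul _) ((U.int_lap.const_mul _).add (U.int_mass.const_mul _)) fun ξ => ?_
  simp only [Pi.add_apply]
  have h1 : 2 * kk ξ ≤ ε * kk ξ ^ 2 + ε⁻¹ := by
    have : ε * kk ξ ^ 2 + ε⁻¹ - 2 * kk ξ = ε * (kk ξ - ε⁻¹) ^ 2 := by field_simp; ring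
    nlinarith [mul_nonneg hε.le (sq_nonneg (kk ξ - ε⁻¹))]
  nlinarith [sq_nonneg (‖U.hat ξ‖)]

lemma quad_eq (U : H2 N) : U.lapSq - 2 * U.gradSq + U.massSq = ∫ ξ, (kk ξ - 1) ^ 2 * ‖U.hat ξ‖ ^ 2 := by
  have h : Integrable (fun ξ => kk ξ ^ 2 * ‖U.hat ξ‖ ^ 2 - 2 * (kk ξ * ‖U.hat ξ‖ ^ 2)) :=
    U.int_lap.sub (U.int_grad.const_mul 2)
  rw [grad_hat, lap_hat, mass_hat, ← integral_const_mul, ← integral_sub U.int_lap (U.int_grad.const_mul _),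
    ← integral_add h U.int_mass]
  congr 1; funext ξ; ring

lemma kk_hat_memLp (U : H2 N) : MemLp (fun ξ => (kk ξ : ℂ) * U.hat ξ) 2 := by
  rw [memLp_two_iff_integrable_sq_norm]
  · refine U.int_lap.congr (ae_of_all _ fun ξ => ?_)
    simp [mul_pow]
  · exact (Complex.continuous_ofReal.comp kk_cont).aestronglyMeasurable.mul (Lp.memLp _).aestronglyMeasurable

/-- Frequency truncation. -/
def trunc (U : H2 N) (S : Set (Esp N)) (hS : MeasurableSet S) : H2 N :=
  ofHat (S.indicator U.hat) ((Lp.memLp _).indicator hS) (by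
    have := U.kk_hat_memLp.indicator hS
    have e : (fun ξ => (kk ξ : ℂ) * S.indicator U.hat ξ) = S.indicator (fun ξ => (kk ξ : ℂ) * U.hat ξ) := by
      funext ξ
      by_cases h : ξ ∈ S <;> simp [h]
    rw [e]; exact this)

lemma trunc_hat (U : H2 N) (S : Set (Esp N)) (hS : MeasurableSet S) :
    (U.trunc S hS).hat =ᵐ[volume] S.indicator U.hat := hat_ofHat _ _ _

lemma trunc_mass (U : H2 N) (S : Set (Esp N)) (hS : MeasurableSet S) {g : Esp N → ℝ}
    (hi : Integrable fun ξ => g ξ * ‖U.hat ξ‖ ^ 2) (hg : ∀ ξ ∈ S, 1 ≤ g ξ) (hg0 : ∀ ξ, 0 ≤ g ξ) :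
    (U.trunc S hS).massSq ≤ ∫ ξ, g ξ * ‖U.hat ξ‖ ^ 2 := by
  rw [mass_hat]
  refine integral_mono_ae (int_mass _) hi ?_
  filter_upwards [U.trunc_hat S hS] with ξ hξ
  rw [hξ]
  by_cases h : ξ ∈ S
  · simp only [h, Set.indicator_of_mem]
    nlinarith [sq_nonneg (‖U.hat ξ‖), hg ξ h]
  · simp only [h, Set.indicator_of_notMem, not_false_eq_true, norm_zero]
    rw [zero_pow two_ne_zero]
    exact mul_nonneg (hg0 ξ) (sq_nonneg _)

lemma trunc_lap (U : H2 N) (S : Set (Esp N)) (hS : MeasurableSet S) {g : Esp N → ℝ}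
    (hi : Integrable fun ξ => g ξ * ‖U.hat ξ‖ ^ 2) (hg : ∀ ξ ∈ S, kk ξ ^ 2 ≤ g ξ) (hg0 : ∀ ξ, 0 ≤ g ξ) :
    (U.trunc S hS).lapSq ≤ ∫ ξ, g ξ * ‖U.hat ξ‖ ^ 2 := by
  rw [lap_hat]
  refine integral_mono_ae (int_lap _) hi ?_
  filter_upwards [U.trunc_hat S hS] with ξ hξ
  rw [hξ]
  by_cases h : ξ ∈ S
  · simp only [h, Set.indicator_of_mem]
    nlinarith [sq_nonneg (‖U.hat ξ‖), hg ξ h]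
  · simp only [h, Set.indicator_of_notMem, not_false_eq_true, norm_zero]
    have := hg0 ξ
    simp
    positivity

lemma trunc_add (U : H2 N) (S : Set (Esp N)) (hS : MeasurableSet S) :
    ∀ᵐ x, U.u x = (U.trunc S hS).u x + (U.trunc Sᶜ hS.compl).u x := by
  have h0 : U.u =ᵐ[volume] (𝓕⁻ U.hat : Lp ℂ 2 (volume : Measure (Esp N))) := by
    unfold hat
    rw [FourierTransform.fourierInv_fourier_eq]
    exact U.u_mem.coeFn_toLp.symm
  have m1 : MemLp (S.indicator U.hat) 2 (volume : Measure (Esp N)) := (Lp.memLp _).indicator hS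
  have m2 : MemLp (Sᶜ.indicator U.hat) 2 (volume : Measure (Esp N)) := (Lp.memLp _).indicator hS.compl
  have h1 : U.hat = m1.toLp _ + m2.toLp _ := by
    rw [← MemLp.toLp_add m1 m2]
    conv_lhs => rw [← Lp.toLp_coeFn U.hat (Lp.memLp _)]
    congr 1
    rw [Set.indicator_self_add_compl]
  have h2 : (𝓕⁻ U.hat : Lp ℂ 2 (volume : Measure (Esp N))) = 𝓕⁻ (m1.toLp _) + 𝓕⁻ (m2.toLp _) := by
    conv_lhs => rw [h1]
    exact FourierTransform.fourierInv_add _ _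
  rw [h2] at h0
  filter_upwards [h0, Lp.coeFn_add (𝓕⁻ (m1.toLp _)) (𝓕⁻ (m2.toLp _))] with x hx hx2
  rw [hx, hx2]; rfl

lemma split (U : H2 N) {r : ℝ} (hr : 0 < r) : ∃ L H : H2 N, (∀ᵐ x, U.u x = L.u x + H.u x) ∧
    (∃ C, ∀ᵐ x, ‖L.u x‖ ≤ C) ∧ L.massSq ≤ U.massSq ∧ L.lapSq ≤ U.lapSq ∧ L.lapSq ≤ r * U.gradSq ∧
    r * H.massSq ≤ U.gradSq ∧ H.lapSq ≤ U.lapSq := by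
  set S : Set (Esp N) := {ξ | kk ξ ≤ r}
  have hS : MeasurableSet S := (isClosed_le kk_cont continuous_const).measurableSet
  refine ⟨U.trunc S hS, U.trunc Sᶜ hS.compl, U.trunc_add S hS, ⟨∫ ξ, ‖S.indicator U.hat ξ‖, ?_⟩, ?_, ?_, ?_, ?_, ?_⟩
  · refine finv_bdd _ ?_
    have hcomp : IsCompact S := by
      refine Metric.isCompact_of_isClosed_isBounded (isClosed_le kk_cont continuous_const) ?_
      refine (Metric.isBounded_closedBall (x := (0 : Esp N)) (r := 1 + r)).subset ?_
      intro ξ hξ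
      simp only [S, Set.mem_ofPred_eq, kk] at hξ
      simp only [mem_closedBall_zero_iff]
      have hpi := Real.pi_gt_three
      have h1 : 1 ≤ 4 * Real.pi ^ 2 := by nlinarith
      have : ‖ξ‖ ^ 2 ≤ r := by nlinarith [sq_nonneg ‖ξ‖]
      nlinarith [norm_nonneg ξ]
    rw [integrable_indicator_iff hS]
    exact (memLp_locInt (Lp.memLp U.hat)).integrableOn_isCompact hcomp
  · rw [U.mass_hat]
    simpa using U.trunc_mass S hS (g := fun _ => 1) (by simpa using U.int_mass) (by simp) (by simp)
  · rw [U.lap_hat]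
    exact U.trunc_lap S hS U.int_lap (fun _ _ => le_rfl) (fun _ => by positivity)
  · rw [U.grad_hat, ← integral_const_mul]
    have := U.trunc_lap S hS (g := fun ξ => r * kk ξ) (by simpa [mul_assoc] using U.int_grad.const_mul r)
      (fun ξ hξ => ?_) (fun ξ => ?_)
    · simpa [mul_assoc] using this
    · have := kk_nonneg ξ
      have h2 : kk ξ ≤ r := hξ
      nlinarith
    · exact mul_nonneg hr.le (kk_nonneg ξ)
  · rw [U.grad_hat]
    have := U.trunc_mass Sᶜ hS.compl (g := fun ξ => r⁻¹ * kk ξ) (by simpa [mul_assoc] using U.int_grad.const_mul r⁻¹)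
      (fun ξ hξ => ?_) (fun ξ => ?_)
    · simp only [mul_assoc] at this
      rw [integral_const_mul] at this
      rwa [← le_inv_mul_iff₀ hr]
    · have h2 : r < kk ξ := by simpa [S] using hξ
      rw [inv_mul_eq_div, le_div_iff₀ hr]; linarith
    · exact mul_nonneg (by positivity) (kk_nonneg ξ)
  · rw [U.lap_hat]
    exact U.trunc_lap _ hS.compl U.int_lap (fun _ _ => le_rfl) (fun _ => by positivity)

lemma mass_zero_of_grad (hN : 1 ≤ N) (U : H2 N) (h : U.gradSq = 0) : U.massSq = 0 := by
  rw [grad_hat, integral_eq_zero_iff_of_nonneg (fun ξ => mul_nonneg (kk_nonneg ξ) (by positivity)) U.int_grad] at h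
  rw [mass_hat]
  have : Nonempty (Fin N) := ⟨⟨0, hN⟩⟩
  have h0 : ∀ᵐ ξ : Esp N, ξ ≠ 0 := by
    exact Measure.ae_ne volume 0
  rw [integral_eq_zero_of_ae]
  filter_upwards [h, h0] with ξ hξ h0
  have hk : kk ξ ≠ 0 := by
    unfold kk
    have := norm_pos_iff.2 h0
    have := Real.pi_pos
    positivity
  simp only [Pi.zero_apply, mul_eq_zero, hk, false_or] at hξ
  exact hξ

lemma exists_low (hN : 1 ≤ N) {m ε : ℝ} (hm : 0 < m) (hε : 0 < ε) : ∃ U : H2 N, U.massSq = m ∧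
    U.lapSq - 2 * U.gradSq + U.massSq ≤ ε := by
  set ξ0 : Esp N := EuclideanSpace.single ⟨0, hN⟩ (2 * Real.pi)⁻¹
  have hk0 : kk ξ0 = 1 := by
    have := Real.pi_pos
    simp [kk, ξ0, abs_of_pos this]
    field_simp; norm_num
  have hc : ∀ᶠ ξ in 𝓝 ξ0, (kk ξ - 1) ^ 2 < ε / m := by
    have : Tendsto (fun ξ : Esp N => (kk ξ - 1) ^ 2) (𝓝 ξ0) (𝓝 ((kk ξ0 - 1) ^ 2)) := 
      ((kk_cont.sub continuous_const).pow 2).tendsto _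
    refine this.eventually_lt_const ?_
    rw [hk0]; simp; positivity
  obtain ⟨δ, hδ, hball⟩ := Metric.eventually_nhds_iff_ball.1 hc
  set B := Metric.ball ξ0 δ
  have hBm : MeasurableSet B := measurableSet_ball
  have hBfin : volume B ≠ ⊤ := measure_ball_lt_top.ne
  have hBpos : 0 < (volume B).toReal := ENNReal.toReal_pos (Metric.measure_ball_pos _ _ hδ).ne' hBfin
  set a : ℝ := Real.sqrt (m / (volume B).toReal)
  set f : Esp N → ℂ := B.indicator fun _ => (a : ℂ)
  have hf : MemLp f 2 := memLp_indicator_const 2 hBm _ (Or.inr hBfin)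
  have hk : MemLp (fun ξ => (kk ξ : ℂ) * f ξ) 2 := by
    have hbd : ∀ ξ, ‖(kk ξ : ℂ) * f ξ‖ ≤ ‖(((ε / m + 2 : ℝ) : ℂ)) * f ξ‖ := by
      intro ξ
      by_cases h : ξ ∈ B
      · rw [norm_mul, norm_mul]
        gcongr
        rw [Complex.norm_real, Complex.norm_real, Real.norm_of_nonneg (kk_nonneg _), Real.norm_of_nonneg (by positivity)]
        nlinarith [hball ξ h, sq_nonneg (kk ξ - 1 - 1)]
      · simp [f, h]
    refine (hf.const_mul (((ε / m + 2 : ℝ) : ℂ))).of_le ?_ (ae_of_all _ hbd)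
    exact (Complex.continuous_ofReal.comp kk_cont).aestronglyMeasurable.mul hf.aestronglyMeasurable
  have hsq : ∀ ξ, ‖f ξ‖ ^ 2 = B.indicator (fun _ => m / (volume B).toReal) ξ := by
    intro ξ
    by_cases h : ξ ∈ B
    · simp only [f, h, Set.indicator_of_mem, Complex.norm_real, Real.norm_eq_abs, sq_abs, a]
      rw [Real.sq_sqrt (by positivity)]
    · simp [f, h]
  have hmass : (ofHat f hf hk).massSq = m := by
    rw [mass_hat, integral_congr_ae (g := B.indicator (fun _ => m / (volume B).toReal))]
    · rw [integral_indicator hBm]; simp [Measure.real]; field_simp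
    · filter_upwards [hat_ofHat f hf hk] with ξ hξ
      rw [hξ, hsq]
  refine ⟨ofHat f hf hk, hmass, ?_⟩
  rw [quad_eq]
  have : ε = ∫ ξ, ε / m * ‖(ofHat f hf hk).hat ξ‖ ^ 2 := by
    rw [integral_const_mul, ← mass_hat, hmass]; field_simp
  conv_rhs => rw [this]
  refine integral_mono_of_nonneg (ae_of_all _ fun _ => by positivity) ((int_mass _).const_mul _) ?_
  filter_upwards [hat_ofHat f hf hk] with ξ hξ
  rw [hξ]
  by_cases h : ξ ∈ B
  · have := hball ξ h
    gcongr
  · simp [f, h]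

end H2

end

section
open scoped FourierTransform SchwartzMap LineDeriv ContDiff

lemma lapC_test {N : ℕ} {φ : Esp N → ℂ} (h : TestFun φ) : TestFun (lapC φ) := by
  constructor
  · unfold lapC
    exact ContDiff.sum fun i _ => (pderivC_test i (pderivC_test i h)).1
  · have : lapC φ = ∑ i, pderivC i (pderivC i φ) := by
      funext x; simp [lapC]
    rw [this]
    refine Finset.sum_induction _ HasCompactSupport (fun _ _ h1 h2 => h1.add h2) HasCompactSupport.zero
      fun i _ => (pderivC_test i (pderivC_test i h)).2

lemma test_ibp {N : ℕ} {f φ : Esp N → ℂ} (hf : TestFun f) (h : TestFun φ) (i : Fin N) :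
    ∫ x, f x * pderivC i φ x = - ∫ x, pderivC i f x * φ x := by
  refine integral_mul_fderiv_eq_neg_fderiv_mul_of_integrable ?_ ?_ ?_ ?_ ?_
  · exact memLp_mul_int (test_memLp (pderivC_test i hf) 2) (test_memLp h 2)
  · exact memLp_mul_int (test_memLp hf 2) (test_memLp (pderivC_test i h) 2)
  · exact memLp_mul_int (test_memLp hf 2) (test_memLp h 2)
  · intro x _; exact (hf.1.differentiable (by simp)) x
  · intro x _; exact (h.1.differentiable (by simp)) x

lemma lap_ibp {N : ℕ} {f φ : Esp N → ℂ} (hf : TestFun f) (h : TestFun φ) :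
    ∫ x, f x * lapC φ x = ∫ x, lapC f x * φ x := by
  simp only [lapC, Finset.mul_sum, Finset.sum_mul]
  rw [integral_finsetSum, integral_finsetSum]
  · refine Finset.sum_congr rfl fun i _ => ?_
    rw [test_ibp hf (pderivC_test i h), test_ibp (pderivC_test i hf) h, neg_neg]
  · exact fun i _ => memLp_mul_int (test_memLp (pderivC_test i (pderivC_test i hf)) 2) (test_memLp h 2)
  · exact fun i _ => memLp_mul_int (test_memLp hf 2) (test_memLp (pderivC_test i (pderivC_test i h)) 2)

lemma test_scale {N : ℕ} {φ : Esp N → ℂ} (h : TestFun φ) {l : ℝ} (hl : 0 < l) :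
    TestFun fun x => φ (l⁻¹ • x) := by
  constructor
  · exact h.1.comp (contDiff_const_smul _)
  · exact h.2.comp_homeomorph (Homeomorph.smulOfNeZero l⁻¹ (by positivity))

lemma pderiv_scale {N : ℕ} {φ : Esp N → ℂ} (h : TestFun φ) {l : ℝ} (i : Fin N) (x : Esp N) :
    pderivC i (fun x => φ (l⁻¹ • x)) x = (l : ℂ)⁻¹ * pderivC i φ (l⁻¹ • x) := by
  unfold pderivC
  have h1 : HasFDerivAt φ (fderiv ℝ φ (l⁻¹ • x)) (l⁻¹ • x) := ((h.1.differentiable (by simp)) _).hasFDerivAt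
  have h2 : HasFDerivAt (fun x : Esp N => l⁻¹ • x) (l⁻¹ • ContinuousLinearMap.id ℝ (Esp N)) x :=
    (l⁻¹ • ContinuousLinearMap.id ℝ (Esp N)).hasFDerivAt
  have h3 : HasFDerivAt (fun x => φ (l⁻¹ • x)) _ x := h1.comp x h2
  rw [h3.fderiv]
  simp

lemma lap_scale {N : ℕ} {φ : Esp N → ℂ} (h : TestFun φ) {l : ℝ} (x : Esp N) :
    lapC (fun x => φ (l⁻¹ • x)) x = (l : ℂ)⁻¹ ^ 2 * lapC φ (l⁻¹ • x) := by
  unfold lapC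
  rw [Finset.mul_sum]
  refine Finset.sum_congr rfl fun i _ => ?_
  have : pderivC i (fun x => φ (l⁻¹ • x)) = fun x => (l : ℂ)⁻¹ * pderivC i φ (l⁻¹ • x) := by
    funext x; exact pderiv_scale h i x
  rw [this]
  have h3 := pderiv_scale (pderivC_test i h) (l := l) i x
  have h4 : pderivC i (fun x => (l : ℂ)⁻¹ * pderivC i φ (l⁻¹ • x)) x = 
      (l : ℂ)⁻¹ * pderivC i (fun x => pderivC i φ (l⁻¹ • x)) x := by
    have hd : DifferentiableAt ℝ (fun x => pderivC i φ (l⁻¹ • x)) x :=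
      ((pderivC_test i h).1.comp (contDiff_const_smul _)).differentiable (by simp) x
    change fderiv ℝ (fun x => (l : ℂ)⁻¹ * pderivC i φ (l⁻¹ • x)) x _ = (l : ℂ)⁻¹ * fderiv ℝ _ x _
    rw [fderiv_const_mul hd]
    rfl
  rw [h4, h3]; ring

lemma int_scale {N : ℕ} {F : Type*} [NormedAddCommGroup F] [NormedSpace ℝ F] (f : Esp N → F) {l : ℝ} (hl : 0 < l) :
    ∫ x, f (l • x) = (l ^ N)⁻¹ • ∫ x, f x := by
  rw [Measure.integral_comp_smul]
  simp [abs_of_pos hl]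

lemma memLp_scale {N : ℕ} {f : Esp N → ℂ} (hf : MemLp f 2) {l : ℝ} (hl : 0 < l) : MemLp (fun x => f (l • x)) 2 := by
  have hq : Measure.QuasiMeasurePreserving (fun x : Esp N => l • x) volume volume := by
    refine ⟨(continuous_const_smul l).measurable, ?_⟩
    rw [Measure.map_addHaar_smul _ hl.ne']
    exact Measure.smul_absolutelyContinuous
  have hm : AEStronglyMeasurable (fun x => f (l • x)) volume := hf.aestronglyMeasurable.comp_quasiMeasurePreserving hq
  rw [memLp_two_iff_integrable_sq_norm hm]
  exact (H2.int_sq_of_memLp hf).comp_smul hl.ne'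

namespace H2
variable {N : ℕ}

lemma lap_test_mem {φ : Esp N → ℂ} (h : TestFun φ) : MemLp (lapC φ) 2 := test_memLp (lapC_test h) 2

/-- Scalar multiple. -/
def smul (a : ℂ) (U : H2 N) : H2 N where
  u x := a * U.u x
  grad i x := a * U.grad i x
  lapl x := a * U.lapl x
  u_mem := U.u_mem.const_mul a
  grad_mem i := (U.grad_mem i).const_mul a
  lapl_mem := U.lapl_mem.const_mul a
  grad_spec i φ h := by
    simp only [mul_assoc]
    rw [integral_const_mul, integral_const_mul, U.grad_spec i φ h]; ring
  lapl_spec φ h := by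
    simp only [mul_assoc]
    rw [integral_const_mul, integral_const_mul, U.lapl_spec φ h]

lemma smul_mass (a : ℂ) (U : H2 N) : (U.smul a).massSq = ‖a‖ ^ 2 * U.massSq := by
  simp [massSq, smul, mul_pow, integral_const_mul]
lemma smul_lap (a : ℂ) (U : H2 N) : (U.smul a).lapSq = ‖a‖ ^ 2 * U.lapSq := by
  simp [lapSq, smul, mul_pow, integral_const_mul]
lemma smul_grad (a : ℂ) (U : H2 N) : (U.smul a).gradSq = ‖a‖ ^ 2 * U.gradSq := by
  simp [gradSq, smul, mul_pow, integral_const_mul, Finset.mul_sum]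
lemma smul_p (σ : ℝ) (a : ℂ) (U : H2 N) : (U.smul a).pPow σ = ‖a‖ ^ (2 * σ + 2) * U.pPow σ := by
  simp [pPow, smul, Real.mul_rpow, integral_const_mul]

/-- Sum. -/
def add (U V : H2 N) : H2 N where
  u x := U.u x + V.u x
  grad i x := U.grad i x + V.grad i x
  lapl x := U.lapl x + V.lapl x
  u_mem := U.u_mem.add V.u_mem
  grad_mem i := (U.grad_mem i).add (V.grad_mem i)
  lapl_mem := U.lapl_mem.add V.lapl_mem
  grad_spec i φ h := by
    simp only [add_mul]
    rw [integral_add (memLp_mul_int U.u_mem (test_memLp (pderivC_test i h) 2)) (memLp_mul_int V.u_mem (test_memLp (pderivC_test i h) 2)),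
      integral_add (memLp_mul_int (U.grad_mem i) (test_memLp h 2)) (memLp_mul_int (V.grad_mem i) (test_memLp h 2)),
      U.grad_spec i φ h, V.grad_spec i φ h]; ring
  lapl_spec φ h := by
    simp only [add_mul]
    rw [integral_add (memLp_mul_int U.u_mem (lap_test_mem h)) (memLp_mul_int V.u_mem (lap_test_mem h)),
      integral_add (memLp_mul_int (U.lapl_mem) (test_memLp h 2)) (memLp_mul_int (V.lapl_mem) (test_memLp h 2)),
      U.lapl_spec φ h, V.lapl_spec φ h]

/-- A test function as an element of `H2`. -/
def ofTest {φ : Esp N → ℂ} (h : TestFun φ) : H2 N where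
  u := φ
  grad i := pderivC i φ
  lapl := lapC φ
  u_mem := test_memLp h 2
  grad_mem i := test_memLp (pderivC_test i h) 2
  lapl_mem := lap_test_mem h
  grad_spec i _ hψ := test_ibp h hψ i
  lapl_spec _ hψ := lap_ibp h hψ

/-- Dilation. -/
def dil (U : H2 N) (l : ℝ) (hl : 0 < l) : H2 N where
  u x := U.u (l • x)
  grad i x := l * U.grad i (l • x)
  lapl x := l ^ 2 * U.lapl (l • x)
  u_mem := memLp_scale U.u_mem hl
  grad_mem i := (memLp_scale (U.grad_mem i) hl).const_mul _
  lapl_mem := (memLp_scale U.lapl_mem hl).const_mul _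
  grad_spec i φ h := by
    have hl' : (l : ℂ) ≠ 0 := by exact_mod_cast hl.ne'
    have e1 : ∀ x, U.u (l • x) * pderivC i φ x = 
        (fun y => l * (U.u y * pderivC i (fun x => φ (l⁻¹ • x)) y)) (l • x) := by
      intro x
      simp only
      rw [pderiv_scale h, inv_smul_smul₀ hl.ne']
      field_simp
    have e2 : ∀ x, (l * U.grad i (l • x)) * φ x = 
        (fun y => l * (U.grad i y * (fun x => φ (l⁻¹ • x)) y)) (l • x) := by
      intro x
      simp only
      rw [inv_smul_smul₀ hl.ne']
      ring
    rw [(integral_congr_ae (ae_of_all _ e1)).trans (int_scale (fun y => (l * (U.u y * pderivC i (fun x => φ (l⁻¹ • x)) y) : ℂ)) hl),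
      (integral_congr_ae (ae_of_all _ e2)).trans (int_scale (fun y => (l * (U.grad i y * (fun x => φ (l⁻¹ • x)) y) : ℂ)) hl), integral_const_mul, integral_const_mul,
      U.grad_spec i _ (test_scale h hl)]
    simp
  lapl_spec φ h := by
    have hl' : (l : ℂ) ≠ 0 := by exact_mod_cast hl.ne'
    have e1 : ∀ x, U.u (l • x) * lapC φ x = 
        (fun y => l ^ 2 * (U.u y * lapC (fun x => φ (l⁻¹ • x)) y)) (l • x) := by
      intro x
      simp only
      rw [lap_scale h, inv_smul_smul₀ hl.ne']
      field_simp
    have e2 : ∀ x, (l ^ 2 * U.lapl (l • x)) * φ x = 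
        (fun y => l ^ 2 * (U.lapl y * (fun x => φ (l⁻¹ • x)) y)) (l • x) := by
      intro x
      simp only
      rw [inv_smul_smul₀ hl.ne']
      ring
    rw [(integral_congr_ae (ae_of_all _ e1)).trans (int_scale (fun y => (l ^ 2 * (U.u y * lapC (fun x => φ (l⁻¹ • x)) y) : ℂ)) hl),
      (integral_congr_ae (ae_of_all _ e2)).trans (int_scale (fun y => (l ^ 2 * (U.lapl y * (fun x => φ (l⁻¹ • x)) y) : ℂ)) hl), integral_const_mul, integral_const_mul,
      U.lapl_spec _ (test_scale h hl)]

lemma dil_mass (U : H2 N) {l : ℝ} (hl : 0 < l) : (U.dil l hl).massSq = (l ^ N)⁻¹ * U.massSq := by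
  exact int_scale (fun x => ‖U.u x‖ ^ 2) hl
lemma dil_p (σ : ℝ) (U : H2 N) {l : ℝ} (hl : 0 < l) : (U.dil l hl).pPow σ = (l ^ N)⁻¹ * U.pPow σ := by
  exact int_scale (fun x => ‖U.u x‖ ^ (2 * σ + 2)) hl
lemma dil_lap (U : H2 N) {l : ℝ} (hl : 0 < l) : (U.dil l hl).lapSq = (l ^ N)⁻¹ * (l ^ 4 * U.lapSq) := by
  have := int_scale (fun x => l ^ 4 * ‖U.lapl x‖ ^ 2) hl
  unfold lapSq
  rw [← integral_const_mul, ← smul_eq_mul, ← this]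
  congr 1; funext x
  simp [dil, abs_of_pos hl]; ring
lemma dil_grad (U : H2 N) {l : ℝ} (hl : 0 < l) : (U.dil l hl).gradSq = (l ^ N)⁻¹ * (l ^ 2 * U.gradSq) := by
  unfold gradSq
  rw [Finset.mul_sum, Finset.mul_sum]
  refine Finset.sum_congr rfl fun i _ => ?_
  have := int_scale (fun x => l ^ 2 * ‖U.grad i x‖ ^ 2) hl
  rw [← integral_const_mul, ← smul_eq_mul, ← this]
  congr 1; funext x
  simp [dil, abs_of_pos hl]; ring

/-- existence of mass preserving dilations -/
lemma dilM (σ : ℝ) (U : H2 N) {l : ℝ} (hl : 0 < l) : ∃ V : H2 N, V.massSq = U.massSq ∧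
    V.gradSq = l ^ 2 * U.gradSq ∧ V.lapSq = l ^ 4 * U.lapSq ∧ V.pPow σ = l ^ ((N : ℝ) * σ) * U.pPow σ := by
  set a : ℝ := l ^ ((N : ℝ) / 2) with ha
  have ha0 : 0 < a := Real.rpow_pos_of_pos hl _
  have hn : ‖(a : ℂ)‖ = a := by simp [abs_of_pos ha0]
  have h2 : a ^ 2 = l ^ N := by
    rw [ha, ← Real.rpow_natCast, ← Real.rpow_mul hl.le, ← Real.rpow_natCast]; congr 1; push_cast; ring
  have hp : a ^ (2 * σ + 2) = l ^ ((N : ℝ) * σ) * l ^ N := by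
    rw [ha, ← Real.rpow_mul hl.le, ← Real.rpow_natCast, ← Real.rpow_add hl]; congr 1; ring
  have hlN : l ^ N ≠ 0 := by positivity
  refine ⟨(U.dil l hl).smul a, ?_, ?_, ?_, ?_⟩
  · rw [smul_mass, dil_mass, hn, h2]; field_simp
  · rw [smul_grad, dil_grad, hn, h2]; field_simp
  · rw [smul_lap, dil_lap, hn, h2]; field_simp
  · rw [smul_p, dil_p, hn, hp]; field_simp

/-- rescaling the mass by a factor `s` -/
lemma scaleM (σ : ℝ) (U : H2 N) {s : ℝ} (hs : 0 ≤ s) : ∃ V : H2 N, V.massSq = s * U.massSq ∧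
    V.gradSq = s * U.gradSq ∧ V.lapSq = s * U.lapSq ∧ V.pPow σ = s ^ (σ + 1) * U.pPow σ := by
  have hn : ‖((Real.sqrt s : ℝ) : ℂ)‖ = Real.sqrt s := by simp [abs_of_nonneg (Real.sqrt_nonneg s)]
  have h2 : (Real.sqrt s) ^ 2 = s := Real.sq_sqrt hs
  refine ⟨U.smul (Real.sqrt s : ℝ), ?_, ?_, ?_, ?_⟩
  · rw [smul_mass, hn, h2]
  · rw [smul_grad, hn, h2]
  · rw [smul_lap, hn, h2]
  · rw [smul_p, hn, Real.sqrt_eq_rpow, ← Real.rpow_mul hs]; congr 2; ring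

end H2

end

section
open scoped FourierTransform SchwartzMap LineDeriv ContDiff

namespace H2
variable {N : ℕ}

lemma ae_zero_of_mass {U : H2 N} (h : U.massSq = 0) : ∀ᵐ x, U.u x = 0 := by
  unfold massSq at h
  rw [integral_eq_zero_iff_of_nonneg (fun x => by positivity) (int_sq_of_memLp U.u_mem)] at h
  filter_upwards [h] with x hx
  simpa using hx

lemma p_zero_of_mass {σ : ℝ} (hσ : 0 < σ) {U : H2 N} (h : U.massSq = 0) : U.pPow σ = 0 := by
  unfold pPow
  rw [integral_eq_zero_of_ae]
  filter_upwards [ae_zero_of_mass h] with x hx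
  rw [hx, norm_zero, Real.zero_rpow (by linarith)]; rfl

lemma grad_pos (hN : 1 ≤ N) {U : H2 N} (h : 0 < U.massSq) : 0 < U.gradSq := by
  rcases U.gradSq_nonneg.lt_or_eq with h1 | h1
  · exact h1
  · have := U.mass_zero_of_grad hN h1.symm; linarith

lemma lap_pos (hN : 1 ≤ N) {U : H2 N} (h : 0 < U.massSq) : 0 < U.lapSq := by
  rcases U.lapSq_nonneg.lt_or_eq with h1 | h1
  · exact h1
  · have hg := grad_pos hN h
    have := U.two_grad_le (ε := U.massSq / U.gradSq) (by positivity)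
    rw [← h1, inv_div, div_mul_cancel₀ _ h.ne'] at this
    linarith

/-- Gagliardo-Nirenberg inequality with constant `C`. -/
def GN (N : ℕ) (σ C : ℝ) : Prop := 0 ≤ C ∧ ∀ V : H2 N, V.pPow σ ≤
  C * V.lapSq ^ ((N : ℝ) * σ / 4) * V.massSq ^ (σ + 1 - (N : ℝ) * σ / 4)

lemma exists_GN (hN : 1 ≤ N) {σ m K : ℝ} (hσ : 0 < σ) (hm : 0 < m)
    (hK : ∀ V : H2 N, V.massSq = m → -K ≤ V.energy σ) : ∃ C, GN N σ C := by
  set q : ℝ := (N : ℝ) * σ / 4 with hq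
  set D : ℝ := (σ + 1) * (1 + |K|) with hD
  have hD0 : 0 ≤ D := by positivity
  refine ⟨D * m ^ (-(σ + 1 - q)), by positivity, fun V => ?_⟩
  rcases V.massSq_nonneg.lt_or_eq with hM | hM
  swap
  · rw [p_zero_of_mass hσ hM.symm]
    have := V.lapSq_nonneg
    have := V.massSq_nonneg
    positivity
  have hA := lap_pos hN hM
  set A := V.lapSq
  set M := V.massSq
  set s := m / M with hs
  have hs0 : 0 < s := by positivity
  obtain ⟨W, w1, w2, w3, w4⟩ := V.scaleM σ hs0.le
  have hsA : 0 < s * A := by positivity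
  set l : ℝ := (s * A) ^ (-(1/4) : ℝ) with hl
  have hl0 : 0 < l := Real.rpow_pos_of_pos hsA _
  obtain ⟨Z, z1, z2, z3, z4⟩ := W.dilM σ hl0
  have hl4 : l ^ 4 * (s * A) = 1 := by
    rw [hl, ← Real.rpow_natCast, ← Real.rpow_mul hsA.le]
    nth_rw 2 [← Real.rpow_one (s * A)]
    rw [← Real.rpow_add hsA]
    norm_num
  have hlq : l ^ ((N : ℝ) * σ) = (s * A) ^ (-q) := by
    rw [hl, ← Real.rpow_mul hsA.le]; congr 1; rw [hq]; ring
  have hmZ : Z.massSq = m := by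
    rw [z1, w1]; change m / M * M = m; field_simp
  have hE := hK Z hmZ
  unfold energy at hE
  have hgz := Z.gradSq_nonneg
  rw [w3] at z3
  change Z.lapSq = l ^ 4 * (s * A) at z3
  rw [z3, hl4, z4, hlq, w4] at hE
  have hPf : (s * A) ^ (-q) * (s ^ (σ + 1) * V.pPow σ) ≤ D := by
    have h1 : 1 / (σ + 1) * ((s * A) ^ (-q) * (s ^ (σ + 1) * V.pPow σ)) ≤ 1 + |K| := by
      linarith [le_abs_self K]
    rw [one_div, inv_mul_le_iff₀ (by linarith)] at h1
    exact h1
  have e1 : V.pPow σ = ((s * A) ^ (-q) * (s ^ (σ + 1) * V.pPow σ)) * ((s * A) ^ q * s ^ (-(σ + 1))) := by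
    rw [Real.rpow_neg hsA.le, Real.rpow_neg hs0.le]
    have h1 := (Real.rpow_pos_of_pos hsA q).ne'
    have h2 := (Real.rpow_pos_of_pos hs0 (σ+1)).ne'
    field_simp
  have e2 : (s * A) ^ q * s ^ (-(σ + 1)) = m ^ (-(σ + 1 - q)) * A ^ q * M ^ (σ + 1 - q) := by
    rw [Real.mul_rpow hs0.le hA.le]
    have : s ^ q * s ^ (-(σ + 1)) = m ^ (-(σ + 1 - q)) * M ^ (σ + 1 - q) := by
      rw [← Real.rpow_add hs0, hs, Real.div_rpow hm.le hM.le, div_eq_mul_inv, ← Real.rpow_neg hM.le]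
      congr 2 <;> ring
    calc _ = A ^ q * (s ^ q * s ^ (-(σ + 1))) := by ring
      _ = _ := by rw [this]; ring
  rw [e1, e2]
  calc _ ≤ D * (m ^ (-(σ + 1 - q)) * A ^ q * M ^ (σ + 1 - q)) := by gcongr
    _ = _ := by ring

lemma bdd_memLp {σ : ℝ} (hσ : 0 < σ) {f : Esp N → ℂ} (hf : MemLp f 2) {C : ℝ} (hC : ∀ᵐ x, ‖f x‖ ≤ C) :
    Integrable (fun x => ‖f x‖ ^ (2 * σ + 2)) := by
  refine Integrable.mono' ((int_sq_of_memLp hf).const_mul (|C| ^ (2 * σ))) ?_ ?_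
  · exact (hf.aestronglyMeasurable.norm.aemeasurable.pow_const _).aestronglyMeasurable
  · filter_upwards [hC] with x hx
    rw [Real.norm_of_nonneg (by positivity), Real.rpow_add_of_nonneg (norm_nonneg _) (by positivity) (by norm_num)]
    norm_cast
    gcongr
    exact hx.trans (le_abs_self C)

lemma eLp_two {f : Esp N → ℂ} (hf : MemLp f 2) : eLpNorm f 2 volume = ENNReal.ofReal (Real.sqrt (∫ x, ‖f x‖ ^ 2)) := by
  rw [hf.eLpNorm_eq_integral_rpow_norm (by norm_num) (by norm_num), Real.sqrt_eq_rpow]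
  norm_num

lemma int_p {σ C : ℝ} (hσ : 0 < σ) (hcrit : (N : ℝ) * σ ≤ 4) (hC : GN N σ C) (U : H2 N) :
    Integrable (fun x => ‖U.u x‖ ^ (2 * σ + 2)) := by
  set B := C * U.lapSq ^ ((N : ℝ) * σ / 4) * U.massSq ^ (σ + 1 - (N : ℝ) * σ / 4)
  have hsplit : ∀ n : ℕ, ∃ L : H2 N, (n + 1 : ℝ) * (∫ x, ‖L.u x - U.u x‖ ^ 2) ≤ U.gradSq ∧
      Integrable (fun x => ‖L.u x‖ ^ (2 * σ + 2)) ∧ L.pPow σ ≤ B := by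
    intro n
    obtain ⟨L, H, h1, ⟨C', h2⟩, h3, h4, h5, h6, h7⟩ := U.split (r := n + 1) (by positivity)
    refine ⟨L, ?_, bdd_memLp hσ L.u_mem h2, (hC.2 L).trans ?_⟩
    · refine le_trans (le_of_eq ?_) h6
      unfold massSq
      congr 1
      refine integral_congr_ae ?_
      filter_upwards [h1] with x hx
      rw [hx]; simp
    · have := hC.1
      have := L.lapSq_nonneg
      have := L.massSq_nonneg
      have := U.lapSq_nonneg
      have : 0 ≤ σ + 1 - (N : ℝ) * σ / 4 := by linarith
      simp only [B]
      gcongr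
  choose L hL1 hL2 hL3 using hsplit
  have hp0 : ENNReal.ofReal (2 * σ + 2) ≠ 0 := by simp; linarith
  have hpt : (ENNReal.ofReal (2 * σ + 2)).toReal = 2 * σ + 2 := ENNReal.toReal_ofReal (by linarith)
  have hT : Tendsto (fun n => eLpNorm ((L n).u - U.u) 2 volume) atTop (𝓝 0) := by
    have e : ∀ n, eLpNorm ((L n).u - U.u) 2 volume = ENNReal.ofReal (Real.sqrt (∫ x, ‖(L n).u x - U.u x‖ ^ 2)) := 
      fun n => eLp_two ((L n).u_mem.sub U.u_mem)
    simp_rw [e]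
    rw [← ENNReal.ofReal_zero]
    refine ENNReal.tendsto_ofReal ?_
    rw [← Real.sqrt_zero]
    refine (Real.continuous_sqrt.tendsto 0).comp ?_
    refine squeeze_zero (g := fun n : ℕ => U.gradSq * (1 / ((n : ℝ) + 1))) (fun n => integral_nonneg fun x => by positivity) (fun n => ?_) ?_
    · rw [mul_one_div, le_div_iff₀ (by positivity), mul_comm]; exact hL1 n
    · simpa using tendsto_one_div_add_atTop_nhds_zero_nat.const_mul U.gradSq
  obtain ⟨ns, -, hns⟩ := (tendstoInMeasure_of_tendsto_eLpNorm (by norm_num) (fun n => (L n).u_mem.aestronglyMeasurable) 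
    U.u_mem.aestronglyMeasurable hT).exists_seq_tendsto_ae
  have hF := Lp.eLpNorm_lim_le_liminf_eLpNorm (p := ENNReal.ofReal (2 * σ + 2)) 
    (fun n => (L (ns n)).u_mem.aestronglyMeasurable) U.u hns
  have hb : ∀ n, eLpNorm (L (ns n)).u (ENNReal.ofReal (2 * σ + 2)) volume ≤ ENNReal.ofReal (B ^ (2 * σ + 2)⁻¹) := by
    intro n
    have hmem : MemLp (L (ns n)).u (ENNReal.ofReal (2 * σ + 2)) volume := by
      rw [← integrable_norm_rpow_iff (L (ns n)).u_mem.aestronglyMeasurable hp0 ENNReal.ofReal_ne_top, hpt]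
      exact hL2 _
    rw [hmem.eLpNorm_eq_integral_rpow_norm hp0 ENNReal.ofReal_ne_top, hpt]
    refine ENNReal.ofReal_le_ofReal ?_
    refine Real.rpow_le_rpow (integral_nonneg fun x => by positivity) (hL3 _) (by positivity)
  have hm : MemLp U.u (ENNReal.ofReal (2 * σ + 2)) volume := by
    refine ⟨U.u_mem.aestronglyMeasurable, lt_of_le_of_lt (hF.trans (liminf_le_of_le (by isBoundedDefault) ?_)) (ENNReal.ofReal_lt_top (r := B ^ (2 * σ + 2)⁻¹))⟩
    intro b hb'
    obtain ⟨n, hn⟩ := hb'.exists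
    exact hn.trans (hb n)
  have := hm.integrable_norm_rpow hp0 ENNReal.ofReal_ne_top
  rwa [hpt] at this

/-- `P` is positive for nontrivial functions. -/
lemma p_pos {σ C : ℝ} (hσ : 0 < σ) (hcrit : (N : ℝ) * σ ≤ 4) (hC : GN N σ C) {U : H2 N} (hU : 0 < U.massSq) :
    0 < U.pPow σ := by
  rcases (U.pPow_nonneg σ).lt_or_eq with h | h
  · exact h
  · exfalso
    have h := h.symm
    unfold pPow at h
    rw [integral_eq_zero_iff_of_nonneg (fun x => by positivity) (U.int_p hσ hcrit hC)] at h
    have : U.massSq = 0 := by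
      unfold massSq
      refine integral_eq_zero_of_ae ?_
      filter_upwards [h] with x hx
      have := (Real.rpow_eq_zero (norm_nonneg _) (by linarith)).1 hx
      simp [this]
    linarith

lemma p_add {σ C : ℝ} (hσ : 0 < σ) (hcrit : (N : ℝ) * σ ≤ 4) (hC : GN N σ C) {U L H : H2 N}
    (h : ∀ᵐ x, U.u x = L.u x + H.u x) : U.pPow σ ≤ 2 ^ (2 * σ + 2) * (L.pPow σ + H.pPow σ) := by
  unfold pPow
  rw [← integral_add (L.int_p hσ hcrit hC) (H.int_p hσ hcrit hC), ← integral_const_mul]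
  refine integral_mono_ae (U.int_p hσ hcrit hC) (((L.int_p hσ hcrit hC).add (H.int_p hσ hcrit hC)).const_mul _) ?_
  filter_upwards [h] with x hx
  rw [hx]
  have h1 : ‖L.u x + H.u x‖ ≤ 2 * max ‖L.u x‖ ‖H.u x‖ := 
    (norm_add_le _ _).trans (by linarith [le_max_left ‖L.u x‖ ‖H.u x‖, le_max_right ‖L.u x‖ ‖H.u x‖])
  have h2 : (max ‖L.u x‖ ‖H.u x‖) ^ (2 * σ + 2) ≤ ‖L.u x‖ ^ (2 * σ + 2) + ‖H.u x‖ ^ (2 * σ + 2) := by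
    have : 0 ≤ ‖L.u x‖ ^ (2 * σ + 2) := by positivity
    have : 0 ≤ ‖H.u x‖ ^ (2 * σ + 2) := by positivity
    rcases max_choice ‖L.u x‖ ‖H.u x‖ with h | h <;> rw [h] <;> linarith
  calc ‖L.u x + H.u x‖ ^ (2 * σ + 2) ≤ (2 * max ‖L.u x‖ ‖H.u x‖) ^ (2 * σ + 2) := 
        Real.rpow_le_rpow (norm_nonneg _) h1 (by linarith)
    _ = 2 ^ (2 * σ + 2) * (max ‖L.u x‖ ‖H.u x‖) ^ (2 * σ + 2) := by
        rw [Real.mul_rpow (by norm_num) (le_max_of_le_left (norm_nonneg _))]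
    _ ≤ _ := by gcongr

end H2

end

section
open scoped FourierTransform SchwartzMap LineDeriv ContDiff

namespace H2
variable {N : ℕ}

/-- minus the candidate Lagrange multiplier -/
def dd (σ : ℝ) (U : H2 N) : ℝ := (U.lapSq - 2 * U.gradSq - U.pPow σ) / U.massSq

lemma key_le {σ : ℝ} (hσ : 0 < σ) (V : H2 N) (hV : 0 < V.massSq) {t : ℝ} (ht : 0 < t) :
    ∃ W : H2 N, W.massSq = t ∧ W.energy σ ≤ V.energy σ + V.dd σ * (t - V.massSq) ∧
      (0 < V.pPow σ → t ≠ V.massSq → W.energy σ < V.energy σ + V.dd σ * (t - V.massSq)) := by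
  set M := V.massSq with hM
  set s := t / M with hs
  have hs0 : 0 < s := by positivity
  obtain ⟨W, w1, w2, w3, w4⟩ := V.scaleM σ hs0.le
  have hP := V.pPow_nonneg σ
  have e : V.energy σ + V.dd σ * (t - M) - W.energy σ = 
      (1 / (σ + 1)) * V.pPow σ * (s ^ (σ + 1) - (1 + (σ + 1) * (s - 1))) := by
    unfold energy dd
    rw [w2, w3, w4, ← hM]
    have : t = s * M := by rw [hs]; field_simp
    rw [this]
    field_simp
    ring
  refine ⟨W, by rw [w1, hs]; change t / M * M = t; field_simp, ?_, fun hp ht' => ?_⟩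
  · have hb : 1 + (σ + 1) * (s - 1) ≤ (1 + (s - 1)) ^ (σ + 1) := 
      one_add_mul_self_le_rpow_one_add (by linarith) (by linarith)
    rw [show 1 + (s - 1) = s by ring] at hb
    have : 0 ≤ (1 / (σ + 1)) * V.pPow σ * (s ^ (σ + 1) - (1 + (σ + 1) * (s - 1))) := 
      mul_nonneg (by positivity) (by linarith)
    linarith
  · have hs1 : s - 1 ≠ 0 := by
      intro h
      apply ht'
      have : s = 1 := by linarith
      rw [hs, div_eq_one_iff_eq hV.ne'] at this
      exact this
    have hb : 1 + (σ + 1) * (s - 1) < (1 + (s - 1)) ^ (σ + 1) := 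
      one_add_mul_self_lt_rpow_one_add (by linarith) hs1 (by linarith)
    rw [show 1 + (s - 1) = s by ring] at hb
    have : 0 < (1 / (σ + 1)) * V.pPow σ * (s ^ (σ + 1) - (1 + (σ + 1) * (s - 1))) := 
      mul_pos (by positivity) (by linarith)
    linarith

/-- scaling up the mass -/
lemma scale_up {σ : ℝ} (hσ : 0 < σ) (V : H2 N) {s : ℝ} (hs : 1 ≤ s) :
    ∃ W : H2 N, W.massSq = s * V.massSq ∧ W.energy σ ≤ s * V.energy σ ∧
      (1 < s → 0 < V.pPow σ → W.energy σ < s * V.energy σ) := by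
  obtain ⟨W, w1, w2, w3, w4⟩ := V.scaleM σ (by linarith : 0 ≤ s)
  have hP := V.pPow_nonneg σ
  have e : s * V.energy σ - W.energy σ = (1 / (σ + 1)) * V.pPow σ * (s ^ (σ + 1) - s) := by
    unfold energy
    rw [w2, w3, w4]
    ring
  refine ⟨W, w1, ?_, fun hs1 hp => ?_⟩
  · have : s ≤ s ^ (σ + 1) := by
      conv_lhs => rw [← Real.rpow_one s]
      exact Real.rpow_le_rpow_of_exponent_le hs (by linarith)
    have : 0 ≤ (1 / (σ + 1)) * V.pPow σ * (s ^ (σ + 1) - s) := mul_nonneg (by positivity) (by linarith)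
    linarith
  · have : s < s ^ (σ + 1) := by
      conv_lhs => rw [← Real.rpow_one s]
      exact Real.rpow_lt_rpow_of_exponent_lt hs1 (by linarith)
    have : 0 < (1 / (σ + 1)) * V.pPow σ * (s ^ (σ + 1) - s) := mul_pos (by positivity) (by linarith)
    linarith

/-- `U` minimizes the energy at its mass. -/
def IsMin (σ : ℝ) (U : H2 N) : Prop := 0 < U.massSq ∧ ∀ V : H2 N, V.massSq = U.massSq → U.energy σ ≤ V.energy σ

lemma IsMin.le_neg (hN : 1 ≤ N) {σ : ℝ} (hσ : 0 < σ) {U : H2 N} (hU : U.IsMin σ) : U.energy σ ≤ - U.massSq := by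
  refine le_of_forall_pos_le_add fun ε hε => ?_
  obtain ⟨V, hV, hV2⟩ := exists_low hN hU.1 hε
  have h1 := hU.2 V hV
  have h2 := V.pPow_nonneg σ
  have h3 : 0 ≤ 1 / (σ + 1) * V.pPow σ := by positivity
  unfold energy at h1 ⊢
  linarith

lemma IsMin.exists_GN (hN : 1 ≤ N) {σ : ℝ} (hσ : 0 < σ) {U : H2 N} (hU : U.IsMin σ) : ∃ C, GN N σ C :=
  H2.exists_GN hN hσ hU.1 (K := - U.energy σ) fun V hV => by simpa using hU.2 V hV

lemma IsMin.p_pos (hN : 1 ≤ N) {σ : ℝ} (hσ : 0 < σ) (hcrit : (N : ℝ) * σ ≤ 4) {U : H2 N} (hU : U.IsMin σ) :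
    0 < U.pPow σ := by
  obtain ⟨C, hC⟩ := hU.exists_GN hN hσ
  exact H2.p_pos hσ hcrit hC hU.1

lemma quad_nonneg (U : H2 N) : 0 ≤ U.lapSq - 2 * U.gradSq + U.massSq := by
  rw [quad_eq]; exact integral_nonneg fun _ => by positivity

lemma IsMin.c_pos (hN : 1 ≤ N) {σ : ℝ} (hσ : 0 < σ) (hcrit : (N : ℝ) * σ ≤ 4) {U : H2 N} (hU : U.IsMin σ) :
    0 < - U.dd σ - 1 := by
  have h1 := hU.le_neg hN hσ
  have h2 := hU.p_pos hN hσ hcrit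
  have h3 := U.quad_nonneg
  have hM := hU.1
  have e : - U.dd σ - 1 = (U.pPow σ - (U.lapSq - 2 * U.gradSq + U.massSq)) / U.massSq := by
    unfold dd; field_simp; ring
  rw [e]
  refine div_pos ?_ hM
  unfold energy at h1
  have h4 : 1 / (σ + 1) * U.pPow σ < U.pPow σ := by
    have : 1 / (σ + 1) < 1 := by rw [div_lt_one (by linarith)]; linarith
    nlinarith
  linarith

lemma mono_c (hN : 1 ≤ N) {σ : ℝ} (hσ : 0 < σ) (hcrit : (N : ℝ) * σ ≤ 4) {U V : H2 N} (hU : U.IsMin σ)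
    (hV : V.IsMin σ) (h : U.massSq < V.massSq) : V.dd σ < U.dd σ := by
  obtain ⟨W1, a1, -, a3⟩ := U.key_le hσ hU.1 hV.1
  obtain ⟨W2, b1, -, b3⟩ := V.key_le hσ hV.1 hU.1
  have c1 := a3 (hU.p_pos hN hσ hcrit) h.ne'
  have c2 := b3 (hV.p_pos hN hσ hcrit) h.ne
  have d1 := hV.2 W1 a1
  have d2 := hU.2 W2 b1
  have : 0 < (U.dd σ - V.dd σ) * (V.massSq - U.massSq) := by nlinarith
  have := (pos_iff_pos_of_mul_pos this).2 (by linarith)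
  linarith

lemma sub_bound {C q : ℝ} (hC : 0 ≤ C) (hq0 : 0 ≤ q) (hq : q < 1) : ∃ K, ∀ A : ℝ, 0 ≤ A → C * A ^ q ≤ A / 2 + K := by
  set b : ℝ := (2 * C + 1) ^ (1 / (1 - q)) with hb
  have hb0 : 0 < b := by positivity
  have hbq : b ^ (1 - q) = 2 * C + 1 := by
    rw [hb, ← Real.rpow_mul (by positivity), one_div_mul_cancel (by linarith), Real.rpow_one]
  refine ⟨C * b ^ q, fun A hA => ?_⟩
  have h1 : (1 + (A / b - 1)) ^ q ≤ 1 + q * (A / b - 1) := 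
    rpow_one_add_le_one_add_mul_self (by linarith [div_nonneg hA hb0.le]) hq0 hq.le
  rw [show 1 + (A / b - 1) = A / b by ring, Real.div_rpow hA hb0.le, div_le_iff₀ (by positivity)] at h1
  have hbb : b ^ q * (2 * C + 1) = b := by
    rw [← hbq, ← Real.rpow_add hb0]; simp
  have hbq0 : 0 < b ^ q := by positivity
  have h2 : C * (A / b) * b ^ q ≤ A / 2 := by
    have : C * (A / b) * b ^ q = A * (C * b ^ q / b) := by ring
    rw [this]
    have : C * b ^ q / b ≤ 1 / 2 := by
      rw [div_le_iff₀ hb0]; nlinarith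
    nlinarith
  have hAb : 0 ≤ A / b := by positivity
  have h3 : 1 + q * (A / b - 1) ≤ 1 + A / b := by nlinarith
  calc C * A ^ q ≤ C * ((1 + A / b) * b ^ q) := by
        gcongr
        exact h1.trans (by gcongr)
    _ = C * (A / b) * b ^ q + C * b ^ q := by ring
    _ ≤ _ := by linarith

/-- lower bound of the energy at mass `t` -/
def BddE (N : ℕ) (σ t : ℝ) : Prop := ∃ K, ∀ V : H2 N, V.massSq = t → -K ≤ V.energy σ

lemma bdd_sub {σ C : ℝ} (hσ : 0 < σ) (hcrit : (N : ℝ) * σ < 4) (hC : GN N σ C) {t : ℝ} (ht : 0 < t) : BddE N σ t := by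
  obtain ⟨K, hK⟩ := sub_bound (C := 1 / (σ + 1) * C * t ^ (σ + 1 - (N : ℝ) * σ / 4)) (q := (N : ℝ) * σ / 4)
    (by have := hC.1
        positivity) (by positivity) (by linarith)
  refine ⟨K + 2 * t, fun V hV => ?_⟩
  have h1 := hK V.lapSq V.lapSq_nonneg
  have h2 := hC.2 V
  rw [hV] at h2
  have h3 := V.two_grad_le (ε := 1 / 2) (by norm_num)
  rw [hV] at h3
  have h4 : 1 / (σ + 1) * V.pPow σ ≤ 1 / (σ + 1) * (C * V.lapSq ^ ((N : ℝ) * σ / 4) * t ^ (σ + 1 - (N : ℝ) * σ / 4)) := by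
    gcongr
  unfold energy
  norm_num at h3
  nlinarith

lemma crit_gap (hN : 1 ≤ N) {σ C : ℝ} (hσ : 0 < σ) (hcrit : (N : ℝ) * σ = 4) (hC : GN N σ C) {U : H2 N}
    (hU : U.IsMin σ) : ∃ a, 0 < a ∧ a < 1 ∧ ∀ V : H2 N, V.massSq = U.massSq → 
      1 / (σ + 1) * V.pPow σ ≤ (1 - a) * V.lapSq := by
  have hm := hU.1
  set m := U.massSq with hmdef
  set K := - U.energy σ with hKdef
  have hK : 0 < K := by have := hU.le_neg hN hσ; linarith
  have hGN : ∀ V : H2 N, V.pPow σ ≤ C * V.lapSq * V.massSq ^ σ := by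
    intro V
    have := hC.2 V
    rw [hcrit, show (4 : ℝ) / 4 = 1 by norm_num, Real.rpow_one, show σ + 1 - 1 = σ by ring] at this
    exact this
  set D := 1 / (σ + 1) * (2 ^ (2 * σ + 2) * C) with hD
  have hC0 := hC.1
  have hD0 : 0 ≤ D := by positivity
  have hcont : Tendsto (fun g : ℝ => D * (g * m ^ σ + g ^ σ)) (𝓝 0) (𝓝 (D * (0 * m ^ σ + 0 ^ σ))) := by
    have : Continuous fun g : ℝ => D * (g * m ^ σ + g ^ σ) := 
      continuous_const.mul ((continuous_id.mul continuous_const).add (Real.continuous_rpow_const hσ.le))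
    exact this.tendsto 0
  rw [Real.zero_rpow hσ.ne', zero_mul, add_zero, mul_zero] at hcont
  obtain ⟨g0, hg0, hball⟩ := Metric.eventually_nhds_iff.1 (hcont.eventually_lt_const (by norm_num : (0 : ℝ) < 1 / 2))
  have hmain : ∀ W : H2 N, W.massSq = m → W.lapSq = 1 → 1 / (σ + 1) * W.pPow σ ≤ 1 - min (1 / 2) (g0 ^ 2 / K) := by
    intro W hWm hWl
    have hg : 0 < W.gradSq := grad_pos hN (by rw [hWm]; exact hm)
    set g := W.gradSq
    by_cases hgg : g < g0
    · have h1 : D * (g * m ^ σ + g ^ σ) < 1 / 2 := hball (by simpa [abs_of_pos hg] using hgg)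
      obtain ⟨L, H, s1, s2, s3, s4, s5, s6, s7⟩ := W.split (r := 1) one_pos
      have h2 := p_add hσ hcrit.le hC s1
      have h3 : L.pPow σ ≤ C * g * m ^ σ := by
        refine (hGN L).trans ?_
        have := L.massSq_nonneg
        have := L.lapSq_nonneg
        rw [← hWm]
        gcongr
        linarith
      have h4 : H.pPow σ ≤ C * 1 * g ^ σ := by
        refine (hGN H).trans ?_
        have := H.massSq_nonneg
        have := H.lapSq_nonneg
        gcongr
        · linarith
        · linarith
      have h5 : 1 / (σ + 1) * W.pPow σ ≤ D * (g * m ^ σ + g ^ σ) := by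
        calc 1 / (σ + 1) * W.pPow σ ≤ 1 / (σ + 1) * (2 ^ (2 * σ + 2) * (L.pPow σ + H.pPow σ)) := by gcongr
          _ ≤ 1 / (σ + 1) * (2 ^ (2 * σ + 2) * (C * g * m ^ σ + C * 1 * g ^ σ)) := by gcongr
          _ = _ := by rw [hD]; ring
      linarith [min_le_left (1 / 2) (g0 ^ 2 / K)]
    · push Not at hgg
      have hl : 0 < Real.sqrt (K / g) := by positivity
      obtain ⟨Z, z1, z2, z3, z4⟩ := W.dilM σ hl
      have hE := hU.2 Z (by rw [z1, hWm])
      rw [hcrit] at z4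
      have e2 : Real.sqrt (K / g) ^ 2 = K / g := Real.sq_sqrt (by positivity)
      have e4 : Real.sqrt (K / g) ^ 4 = (K / g) ^ 2 := by
        calc _ = (Real.sqrt (K / g) ^ 2) ^ 2 := by ring
          _ = _ := by rw [e2]
      have e4' : Real.sqrt (K / g) ^ (4 : ℝ) = (K / g) ^ 2 := by rw [← e4]; norm_cast
      rw [e4'] at z4
      rw [e4, hWl] at z3
      rw [e2] at z2
      change Z.gradSq = K / g * g at z2
      rw [div_mul_cancel₀ _ hg.ne'] at z2
      have hE2 : -K ≤ Z.energy σ := by rw [hKdef]; simpa using hE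
      unfold energy at hE2
      rw [z2, z3, z4] at hE2
      have h6 : K ≤ (K / g) ^ 2 * (1 - 1 / (σ + 1) * W.pPow σ) := by linarith
      have h7 : g ^ 2 / K ≤ 1 - 1 / (σ + 1) * W.pPow σ := by
        rw [div_le_iff₀ hK]
        have : (K / g) ^ 2 * (1 - 1 / (σ + 1) * W.pPow σ) = K * ((1 - 1 / (σ + 1) * W.pPow σ) * K) / g ^ 2 := by ring
        rw [this, le_div_iff₀ (by positivity)] at h6
        exact le_of_mul_le_mul_left h6 hK
      have h8 : g0 ^ 2 / K ≤ g ^ 2 / K := by gcongr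
      linarith [min_le_right (1 / 2) (g0 ^ 2 / K)]
  refine ⟨min (1 / 2) (g0 ^ 2 / K), lt_min (by norm_num) (by positivity), 
    (min_le_left _ _).trans_lt (by norm_num), fun V hV => ?_⟩
  have hA : 0 < V.lapSq := lap_pos hN (by rw [hV]; exact hm)
  set A := V.lapSq
  have hl : 0 < A ^ (-(1/4) : ℝ) := Real.rpow_pos_of_pos hA _
  have hl4 : (A ^ (-(1/4) : ℝ)) ^ (4 : ℝ) = A⁻¹ := by
    rw [← Real.rpow_mul hA.le, ← Real.rpow_neg_one]; norm_num
  obtain ⟨W, w1, w2, w3, w4⟩ := V.dilM σ hl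
  have hl4' : (A ^ (-(1/4) : ℝ)) ^ 4 = A⁻¹ := by rw [← hl4]; norm_cast
  rw [hcrit, hl4] at w4
  rw [hl4'] at w3
  change W.lapSq = A⁻¹ * A at w3
  rw [inv_mul_cancel₀ hA.ne'] at w3
  have h1 := hmain W (by rw [w1, hV]) w3
  rw [w4] at h1
  have h2 : 1 / (σ + 1) * V.pPow σ = (1 / (σ + 1) * (A⁻¹ * V.pPow σ)) * A := by field_simp
  rw [h2]
  gcongr

lemma bdd_crit (hN : 1 ≤ N) {σ C : ℝ} (hσ : 0 < σ) (hcrit : (N : ℝ) * σ = 4) (hC : GN N σ C) {U : H2 N}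
    (hU : U.IsMin σ) : ∃ δ, 0 < δ ∧ ∀ t, U.massSq < t → t < U.massSq + δ → BddE N σ t := by
  obtain ⟨a, ha, ha1, hgap⟩ := crit_gap hN hσ hcrit hC hU
  have hm := hU.1
  set m := U.massSq with hmdef
  have hcont : Tendsto (fun t : ℝ => (t / m) ^ σ * (1 - a)) (𝓝 m) (𝓝 ((m / m) ^ σ * (1 - a))) := by
    have : Continuous fun t : ℝ => (t / m) ^ σ * (1 - a) := 
      ((Real.continuous_rpow_const hσ.le).comp (continuous_id.div_const m)).mul continuous_const
    exact this.tendsto m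
  rw [div_self hm.ne', Real.one_rpow, one_mul] at hcont
  obtain ⟨δ, hδ, hball⟩ := Metric.eventually_nhds_iff.1 (hcont.eventually_lt_const (by linarith : 1 - a < 1 - a / 2))
  refine ⟨δ, hδ, fun t ht1 ht2 => ⟨(a / 2)⁻¹ * t, fun V hV => ?_⟩⟩
  have ht0 : 0 < t := by linarith
  have h1 : (t / m) ^ σ * (1 - a) < 1 - a / 2 := hball (by rw [Real.dist_eq, abs_of_pos (by linarith)]; linarith)
  set s := m / t with hs
  have hs0 : 0 < s := by positivity
  obtain ⟨W, w1, w2, w3, w4⟩ := V.scaleM σ hs0.le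
  have h2 := hgap W (by rw [w1, hV, hs]; field_simp)
  rw [w3, w4] at h2
  have hts : (t / m) ^ σ * s ^ (σ + 1) = s := by
    rw [Real.rpow_add hs0, Real.rpow_one, ← mul_assoc, ← Real.mul_rpow (by positivity) hs0.le]
    have : t / m * s = 1 := by rw [hs]; field_simp
    rw [this, Real.one_rpow, one_mul]
  have hA := V.lapSq_nonneg
  have h3 : s * (1 / (σ + 1) * V.pPow σ) ≤ s * ((1 - a / 2) * V.lapSq) := by
    calc s * (1 / (σ + 1) * V.pPow σ) = (t / m) ^ σ * (1 / (σ + 1) * (s ^ (σ + 1) * V.pPow σ)) := by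
          rw [← hts]
          rw [hts]
          nth_rw 1 [← hts]
          ring
      _ ≤ (t / m) ^ σ * ((1 - a) * (s * V.lapSq)) := by gcongr
      _ = s * ((t / m) ^ σ * (1 - a) * V.lapSq) := by ring
      _ ≤ _ := by gcongr
  have h4 := le_of_mul_le_mul_left h3 hs0
  have h5 := V.two_grad_le (ε := a / 2) (by positivity)
  rw [hV] at h5
  unfold energy
  linarith

lemma IsMin.bdd (hN : 1 ≤ N) {σ : ℝ} (hσ : 0 < σ) (hcrit : (N : ℝ) * σ ≤ 4) {U : H2 N}
    (hU : U.IsMin σ) : ∃ δ, 0 < δ ∧ ∀ t, 0 < t → t < U.massSq + δ → BddE N σ t := by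
  obtain ⟨C, hC⟩ := hU.exists_GN hN hσ
  rcases hcrit.lt_or_eq with h | h
  · exact ⟨1, one_pos, fun t ht _ => bdd_sub hσ h hC ht⟩
  · obtain ⟨δ, hδ, hb⟩ := bdd_crit hN hσ h hC hU
    refine ⟨δ, hδ, fun t ht0 ht => ?_⟩
    rcases lt_or_ge U.massSq t with h1 | h1
    · exact hb t h1 ht
    · refine ⟨- (U.energy σ / (U.massSq / t)), fun V hV => ?_⟩
      have hs : 1 ≤ U.massSq / t := by rw [le_div_iff₀ ht0]; linarith
      obtain ⟨W, w1, w2, -⟩ := V.scale_up hσ hs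
      have := hU.2 W (by rw [w1, hV]; field_simp)
      rw [neg_neg, div_le_iff₀ (by linarith)]
      linarith

lemma emin_le {σ t : ℝ} {V : H2 N} (h : V.massSq = t) : EminE N σ t ≤ ((V.energy σ : ℝ) : EReal) :=
  iInf₂_le V h

lemma exists_mass (hN : 1 ≤ N) {t : ℝ} (ht : 0 < t) : ∃ V : H2 N, V.massSq = t := by
  obtain ⟨V, h, -⟩ := exists_low hN ht one_pos
  exact ⟨V, h⟩

lemma coe_F (hN : 1 ≤ N) {σ t : ℝ} (ht : 0 < t) (hb : BddE N σ t) : 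
    (((EminE N σ t).toReal : ℝ) : EReal) = EminE N σ t := by
  obtain ⟨V, hV⟩ := exists_mass hN ht
  obtain ⟨K, hK⟩ := hb
  refine EReal.coe_toReal ?_ ?_
  · intro h
    have := emin_le (σ := σ) hV
    rw [h] at this
    exact absurd this (not_le.2 (EReal.coe_lt_top _))
  · intro h
    have : ((-K : ℝ) : EReal) ≤ EminE N σ t := le_iInf₂ fun V hV => by exact_mod_cast hK V hV
    rw [h] at this
    exact absurd this (not_le.2 (EReal.bot_lt_coe _))

lemma F_le (hN : 1 ≤ N) {σ t : ℝ} (ht : 0 < t) (hb : BddE N σ t) {V : H2 N} (hV : V.massSq = t) :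
    (EminE N σ t).toReal ≤ V.energy σ := by
  have := emin_le (σ := σ) hV
  rw [← coe_F hN ht hb] at this
  exact_mod_cast this

lemma le_F (hN : 1 ≤ N) {σ t b : ℝ} (ht : 0 < t) (hb : BddE N σ t) (h : ∀ V : H2 N, V.massSq = t → b ≤ V.energy σ) :
    b ≤ (EminE N σ t).toReal := by
  have : ((b : ℝ) : EReal) ≤ EminE N σ t := le_iInf₂ fun V hV => by exact_mod_cast h V hV
  rw [← coe_F hN ht hb] at this
  exact_mod_cast this

lemma IsMin.derivs (hN : 1 ≤ N) {σ : ℝ} (hσ : 0 < σ) (hcrit : (N : ℝ) * σ ≤ 4) {U : H2 N}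
    (hU : U.IsMin σ) : ∃ dl dr : ℝ, 
        HasDerivWithinAt (fun t : ℝ => (EminE N σ t).toReal) dl (Set.Iio U.massSq) U.massSq ∧
        HasDerivWithinAt (fun t : ℝ => (EminE N σ t).toReal) dr (Set.Ioi U.massSq) U.massSq ∧
        U.dd σ ≤ dl ∧ dr ≤ U.dd σ := by
  obtain ⟨δ, hδ, hb⟩ := hU.bdd hN hσ hcrit
  have hm := hU.1
  set m := U.massSq with hmdef
  set F : ℝ → ℝ := fun t : ℝ => (EminE N σ t).toReal with hF
  have hconc : ConcaveOn ℝ (Set.Ioo 0 (m + δ)) F := by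
    refine ⟨convex_Ioo _ _, fun x hx y hy a b ha hb' hab => ?_⟩
    have hz : a • x + b • y ∈ Set.Ioo 0 (m + δ) := convex_Ioo _ _ hx hy ha hb' hab
    simp only [smul_eq_mul] at hz ⊢
    refine le_F hN hz.1 (hb _ hz.1 hz.2) fun V hV => ?_
    obtain ⟨W1, p1, p2, -⟩ := V.key_le hσ (by rw [hV]; exact hz.1) hx.1
    obtain ⟨W2, q1, q2, -⟩ := V.key_le hσ (by rw [hV]; exact hz.1) hy.1
    have r1 := F_le hN hx.1 (hb x hx.1 hx.2) p1
    have r2 := F_le hN hy.1 (hb y hy.1 hy.2) q1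
    rw [hV] at p2 q2
    have r1 := mul_le_mul_of_nonneg_left (r1.trans p2) ha
    have r2 := mul_le_mul_of_nonneg_left (r2.trans q2) hb'
    have hb1 : b = 1 - a := by linarith
    refine (add_le_add r1 r2).trans (le_of_eq ?_)
    rw [hb1]; ring
  have hInt : m ∈ interior (Set.Ioo 0 (m + δ)) := by
    rw [interior_Ioo]; exact ⟨hm, by linarith⟩
  have hconv := hconc.neg
  have hl := (hconv.hasDerivWithinAt_leftDeriv_of_mem_interior hInt).neg
  have hr := (hconv.hasDerivWithinAt_rightDeriv_of_mem_interior hInt).neg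
  rw [neg_neg] at hl hr
  refine ⟨_, _, hl, hr, ?_, ?_⟩
  all_goals
    have hFm : F m = U.energy σ := le_antisymm (F_le hN hm (hb m hm (by linarith)) hmdef.symm) 
      (le_F hN hm (hb m hm (by linarith)) hU.2)
    have htan : ∀ t, 0 < t → t < m + δ → F t ≤ F m + U.dd σ * (t - m) := by
      intro t ht0 ht
      obtain ⟨W1, p1, p2, -⟩ := U.key_le hσ hm ht0
      rw [hFm]
      exact (F_le hN ht0 (hb t ht0 ht) p1).trans p2
  · rw [hasDerivWithinAt_iff_tendsto_slope' (by simp)] at hl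
    refine ge_of_tendsto hl ?_
    filter_upwards [Ioo_mem_nhdsLT hm] with t ht
    rw [slope_def_field, le_div_iff_of_neg (by linarith [ht.2])]
    have := htan t ht.1 (by linarith [ht.2])
    linarith
  · rw [hasDerivWithinAt_iff_tendsto_slope' (by simp)] at hr
    refine le_of_tendsto hr ?_
    filter_upwards [Ioo_mem_nhdsGT (show m < m + δ by linarith)] with t ht
    rw [slope_def_field, div_le_iff₀ (by linarith [ht.1])]
    have := htan t (by linarith [ht.1]) ht.2
    linarith

lemma no_min (hN : 1 ≤ N) {σ : ℝ} (hσ : 0 < σ) (hcrit : (N : ℝ) * σ ≤ 4) {V : H2 N} (hV : V.IsMin σ)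
    {t : ℝ} (ht : V.massSq < t) : EminE N σ t ≠ ((-t : ℝ) : EReal) := by
  have hm := hV.1
  intro h
  have hs : 1 < t / V.massSq := by rw [lt_div_iff₀ hm]; linarith
  obtain ⟨W, w1, -, w3⟩ := V.scale_up hσ hs.le
  have h1 := w3 hs (hV.p_pos hN hσ hcrit)
  have h2 := hV.le_neg hN hσ
  have h3 := emin_le (σ := σ) (V := W) (t := t) (by rw [w1]; field_simp)
  rw [h] at h3
  have h3 : -t ≤ W.energy σ := by exact_mod_cast h3
  have h4 : t / V.massSq * V.energy σ ≤ t / V.massSq * (- V.massSq) := by gcongr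
  have h5 : t / V.massSq * (- V.massSq) = - t := by field_simp
  linarith

end H2

end

section
open scoped FourierTransform SchwartzMap LineDeriv ContDiff ComplexConjugate

lemma norm_sq_expand (z w : ℂ) (t : ℝ) : ‖z + t * w‖ ^ 2 = ‖z‖ ^ 2 + 2 * t * (z * conj w).re + t ^ 2 * ‖w‖ ^ 2 := by
  simp only [Complex.sq_norm, Complex.normSq_apply, Complex.add_re, Complex.add_im, Complex.mul_re, Complex.mul_im,
    Complex.ofReal_re, Complex.ofReal_im, Complex.conj_re, Complex.conj_im]
  ring

lemma memLp_conj {N : ℕ} {f : Esp N → ℂ} (hf : MemLp f 2) : MemLp (fun x => conj (f x)) 2 := hf.star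

lemma int_mul_conj {N : ℕ} {f g : Esp N → ℂ} (hf : MemLp f 2) (hg : MemLp g 2) : 
    Integrable (fun x => f x * conj (g x)) := memLp_mul_int hf (memLp_conj hg)

lemma re_int {N : ℕ} {f : Esp N → ℂ} (hf : Integrable f) : ∫ x, (f x).re = (∫ x, f x).re := by
  exact Complex.reCLM.integral_comp_comm hf

lemma deriv_sq {N : ℕ} {f g : Esp N → ℂ} (hf : MemLp f 2) (hg : MemLp g 2) :
    HasDerivAt (fun t : ℝ => ∫ x, ‖f x + t * g x‖ ^ 2) (2 * (∫ x, f x * conj (g x)).re) 0 := by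
  have hfg := int_mul_conj hf hg
  have hre : Integrable (fun x => (f x * conj (g x)).re) := hfg.re
  have e : ∀ t : ℝ, ∫ x, ‖f x + t * g x‖ ^ 2 = 
      (∫ x, ‖f x‖ ^ 2) + 2 * t * (∫ x, f x * conj (g x)).re + t ^ 2 * ∫ x, ‖g x‖ ^ 2 := by
    intro t
    simp_rw [norm_sq_expand]
    have h1 : Integrable (fun x => ‖f x‖ ^ 2) := H2.int_sq_of_memLp hf
    have h2 : Integrable (fun x => 2 * t * (f x * conj (g x)).re) := hre.const_mul _
    have h12 : Integrable (fun x => ‖f x‖ ^ 2 + 2 * t * (f x * conj (g x)).re) := h1.add h2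
    have h3 : Integrable (fun x => t ^ 2 * ‖g x‖ ^ 2) := (H2.int_sq_of_memLp hg).const_mul _
    rw [integral_add h12 h3, integral_add h1 h2, integral_const_mul, integral_const_mul, re_int hfg]
  rw [funext e]
  have h := (((hasDerivAt_id (0 : ℝ)).const_mul (2 * (∫ x, f x * conj (g x)).re)).const_add (∫ x, ‖f x‖ ^ 2)).add
    ((hasDerivAt_pow 2 (0 : ℝ)).mul_const (∫ x, ‖g x‖ ^ 2))
  exact (h.congr_deriv (by simp)).congr_of_eventuallyEq (Eventually.of_forall fun t => by
    simp only [Pi.add_apply, id]; ring)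

namespace H2
variable {N : ℕ}

/-- The affine path `U + tV`. -/
def path (U V : H2 N) (t : ℝ) : H2 N := U.add (V.smul (t : ℂ))

lemma path_zero (σ : ℝ) (U V : H2 N) : (U.path V 0).energy σ = U.energy σ := by
  simp [path, add, smul, energy, lapSq, gradSq, pPow]

lemma path_mass_zero (U V : H2 N) : (U.path V 0).massSq = U.massSq := by
  simp [path, add, smul, massSq]

lemma path_dd_zero (σ : ℝ) (U V : H2 N) : (U.path V 0).dd σ = U.dd σ := by
  simp [path, add, smul, dd, massSq, lapSq, gradSq, pPow]

lemma path_mass (U V : H2 N) : HasDerivAt (fun t => (U.path V t).massSq) (2 * (∫ x, U.u x * conj (V.u x)).re) 0 :=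
  deriv_sq U.u_mem V.u_mem

lemma path_lap (U V : H2 N) : HasDerivAt (fun t => (U.path V t).lapSq) (2 * (∫ x, U.lapl x * conj (V.lapl x)).re) 0 :=
  deriv_sq U.lapl_mem V.lapl_mem

lemma path_grad (U V : H2 N) : HasDerivAt (fun t => (U.path V t).gradSq) 
    (∑ i, 2 * (∫ x, U.grad i x * conj (V.grad i x)).re) 0 :=
  HasDerivAt.fun_sum fun i _ => deriv_sq (U.grad_mem i) (V.grad_mem i)

lemma path_p {σ C : ℝ} (hσ : 0 < σ) (hcrit : (N : ℝ) * σ ≤ 4) (hC : GN N σ C) (U V : H2 N) :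
    Integrable (fun x => ((‖U.u x‖ ^ (2 * σ) : ℝ) : ℂ) * U.u x * conj (V.u x)) ∧
    HasDerivAt (fun t => (U.path V t).pPow σ) 
      (2 * (σ + 1) * (∫ x, ((‖U.u x‖ ^ (2 * σ) : ℝ) : ℂ) * U.u x * conj (V.u x)).re) 0 := by
  have hpow : ∀ z : ℂ, ‖z‖ ^ (2 * σ) = (‖z‖ ^ 2) ^ σ := fun z => by
    rw [← Real.rpow_natCast, ← Real.rpow_mul (norm_nonneg _)]; norm_num
  have hpow2 : ∀ z : ℂ, ‖z‖ ^ (2 * σ + 2) = (‖z‖ ^ 2) ^ (σ + 1) := fun z => by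
    rw [← Real.rpow_natCast, ← Real.rpow_mul (norm_nonneg _)]; congr 1; push_cast; ring
  set bound : Esp N → ℝ := fun x => 4 * (σ + 1) * (2 ^ (2 * σ + 2) * (‖U.u x‖ ^ (2 * σ + 2) + ‖V.u x‖ ^ (2 * σ + 2)))
  have hbi : Integrable bound := (((U.int_p hσ hcrit hC).add (V.int_p hσ hcrit hC)).const_mul _).const_mul _
  have hSb : ∀ x, ((‖U.u x‖ + ‖V.u x‖) ^ 2) ^ (σ + 1) ≤ 
      2 ^ (2 * σ + 2) * (‖U.u x‖ ^ (2 * σ + 2) + ‖V.u x‖ ^ (2 * σ + 2)) := by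
    intro x
    have h1 : ‖U.u x‖ + ‖V.u x‖ ≤ 2 * max ‖U.u x‖ ‖V.u x‖ := 
      by linarith [le_max_left ‖U.u x‖ ‖V.u x‖, le_max_right ‖U.u x‖ ‖V.u x‖]
    have h2 : (max ‖U.u x‖ ‖V.u x‖) ^ (2 * σ + 2) ≤ ‖U.u x‖ ^ (2 * σ + 2) + ‖V.u x‖ ^ (2 * σ + 2) := by
      have : 0 ≤ ‖U.u x‖ ^ (2 * σ + 2) := by positivity
      have : 0 ≤ ‖V.u x‖ ^ (2 * σ + 2) := by positivity
      rcases max_choice ‖U.u x‖ ‖V.u x‖ with h | h <;> rw [h] <;> linarith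
    calc ((‖U.u x‖ + ‖V.u x‖) ^ 2) ^ (σ + 1) = (‖U.u x‖ + ‖V.u x‖) ^ (2 * σ + 2) := by
          rw [← Real.rpow_natCast, ← Real.rpow_mul (by positivity)]; congr 1; push_cast; ring
      _ ≤ (2 * max ‖U.u x‖ ‖V.u x‖) ^ (2 * σ + 2) := 
        Real.rpow_le_rpow (by positivity) h1 (by linarith)
      _ = 2 ^ (2 * σ + 2) * (max ‖U.u x‖ ‖V.u x‖) ^ (2 * σ + 2) := by
        rw [Real.mul_rpow (by norm_num) (le_max_of_le_left (norm_nonneg _))]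
      _ ≤ _ := by gcongr
  have hum := U.u_mem.aestronglyMeasurable
  have hvm := V.u_mem.aestronglyMeasurable
  have hInt : Integrable (fun x => ((‖U.u x‖ ^ (2 * σ) : ℝ) : ℂ) * U.u x * conj (V.u x)) := by
    refine Integrable.mono' hbi ?_ (ae_of_all _ fun x => ?_)
    · refine AEStronglyMeasurable.mul (AEStronglyMeasurable.mul ?_ hum) (memLp_conj V.u_mem).aestronglyMeasurable
      exact (Complex.measurable_ofReal.comp_aemeasurable (hum.norm.aemeasurable.pow_const _)).aestronglyMeasurable
    · have h0 : 0 ≤ 2 ^ (2 * σ + 2) * (‖U.u x‖ ^ (2 * σ + 2) + ‖V.u x‖ ^ (2 * σ + 2)) := by positivity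
      have h4 : 2 ^ (2 * σ + 2) * (‖U.u x‖ ^ (2 * σ + 2) + ‖V.u x‖ ^ (2 * σ + 2)) ≤ bound x := by
        simp only [bound]; nlinarith
      refine le_trans (le_trans ?_ (hSb x)) h4
      rw [norm_mul, norm_mul, Complex.norm_real, Real.norm_of_nonneg (by positivity), hpow, RCLike.norm_conj,
        Real.rpow_add_one' (by positivity) (by linarith), mul_assoc]
      gcongr
      · linarith [norm_nonneg (V.u x)]
      · nlinarith [norm_nonneg (V.u x), norm_nonneg (U.u x)]
  refine ⟨hInt, ?_⟩
  have key := hasDerivAt_integral_of_dominated_loc_of_deriv_le (μ := (volume : Measure (Esp N))) (𝕜 := ℝ) (E := ℝ)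
    (bound := bound) (x₀ := (0 : ℝ)) (s := Metric.ball (0 : ℝ) 1)
    (F := fun t x => ‖(U.path V t).u x‖ ^ (2 * σ + 2))
    (F' := fun t x => (2 * (U.u x * conj (V.u x)).re + 2 * t * ‖V.u x‖ ^ 2) * (σ + 1) * (‖U.u x + t * V.u x‖ ^ 2) ^ σ)
    (Metric.ball_mem_nhds _ one_pos)
    (Eventually.of_forall fun t => ((U.path V t).u_mem.aestronglyMeasurable.norm.aemeasurable.pow_const _).aestronglyMeasurable)
    ((U.path V 0).int_p hσ hcrit hC) ?_ ?_ hbi ?_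
  · have hd := key.2
    unfold pPow
    refine hd.congr_deriv ?_
    symm
    rw [← re_int hInt, ← integral_const_mul]
    congr 1
    funext x
    rw [hpow, mul_assoc (Complex.ofReal _), Complex.re_ofReal_mul, mul_zero, zero_mul, add_zero, Complex.ofReal_zero,
      zero_mul, add_zero]
    simp
    ring
  · have h1 : AEStronglyMeasurable (fun x => (U.u x * conj (V.u x)).re) volume := 
      (int_mul_conj U.u_mem V.u_mem).re.aestronglyMeasurable
    have h2 : AEStronglyMeasurable (fun x => (‖U.u x‖ ^ 2) ^ σ) volume :=
      ((hum.norm.aemeasurable.pow_const 2).pow_const σ).aestronglyMeasurable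
    have := ((h1.const_mul 2).mul_const (σ + 1)).mul h2
    refine this.congr (ae_of_all _ fun x => ?_)
    simp
  · refine ae_of_all _ fun x t ht => ?_
    have ht1 : |t| ≤ 1 := by
      have := Metric.mem_ball.1 ht
      rw [Real.dist_eq, sub_zero] at this
      exact this.le
    have hre : |(U.u x * conj (V.u x)).re| ≤ ‖U.u x‖ * ‖V.u x‖ := by
      refine (Complex.abs_re_le_norm _).trans ?_
      rw [norm_mul, RCLike.norm_conj]
    have hN' : |2 * (U.u x * conj (V.u x)).re + 2 * t * ‖V.u x‖ ^ 2| ≤ 4 * (‖U.u x‖ + ‖V.u x‖) ^ 2 := by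
      have h1 : |2 * t * ‖V.u x‖ ^ 2| ≤ 2 * ‖V.u x‖ ^ 2 := by
        rw [abs_mul, abs_mul, abs_of_nonneg (sq_nonneg ‖V.u x‖), abs_two]
        nlinarith [sq_nonneg ‖V.u x‖]
      have h2 : |2 * (U.u x * conj (V.u x)).re| ≤ 2 * (‖U.u x‖ * ‖V.u x‖) := by
        rw [abs_mul, abs_two]; linarith
      have := abs_add_le (2 * (U.u x * conj (V.u x)).re) (2 * t * ‖V.u x‖ ^ 2)
      nlinarith [norm_nonneg (U.u x), norm_nonneg (V.u x), mul_nonneg (norm_nonneg (U.u x)) (norm_nonneg (V.u x)),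
        sq_nonneg ‖U.u x‖]
    have hNN : ‖U.u x + t * V.u x‖ ≤ ‖U.u x‖ + ‖V.u x‖ := by
      refine (norm_add_le _ _).trans ?_
      rw [norm_mul, Complex.norm_real, Real.norm_eq_abs]
      nlinarith [norm_nonneg (V.u x)]
    rw [norm_mul, norm_mul, Real.norm_eq_abs, Real.norm_of_nonneg (by linarith : 0 ≤ σ + 1),
      Real.norm_of_nonneg (by positivity)]
    calc _ ≤ 4 * (‖U.u x‖ + ‖V.u x‖) ^ 2 * (σ + 1) * ((‖U.u x‖ + ‖V.u x‖) ^ 2) ^ σ := by gcongr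
      _ = 4 * (σ + 1) * ((‖U.u x‖ + ‖V.u x‖) ^ 2) ^ (σ + 1) := by
        rw [Real.rpow_add_one' (by positivity) (by linarith)]; ring
      _ ≤ bound x := by
        simp only [bound]
        have := hSb x
        gcongr
  · refine ae_of_all _ fun x t ht => ?_
    have h1 : HasDerivAt (fun t : ℝ => ‖U.u x + t * V.u x‖ ^ 2) 
        (2 * (U.u x * conj (V.u x)).re + 2 * t * ‖V.u x‖ ^ 2) t := by
      have e : (fun t : ℝ => ‖U.u x + t * V.u x‖ ^ 2) = fun t : ℝ => 
        ‖U.u x‖ ^ 2 + 2 * (U.u x * conj (V.u x)).re * t + t ^ 2 * ‖V.u x‖ ^ 2 := by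
        funext t; rw [norm_sq_expand]; ring
      rw [e]
      have h := (((hasDerivAt_id t).const_mul (2 * (U.u x * conj (V.u x)).re)).const_add (‖U.u x‖ ^ 2)).add
        ((hasDerivAt_pow 2 t).mul_const (‖V.u x‖ ^ 2))
      exact h.congr_deriv (by simp)
    have h2 := h1.rpow_const (p := σ + 1) (Or.inr (by linarith))
    rw [show σ + 1 - 1 = σ by ring] at h2
    refine h2.congr_of_eventuallyEq (Eventually.of_forall fun t => ?_)
    simp only [path, add, smul]
    rw [hpow2]

lemma IsMin.EL (hN : 1 ≤ N) {σ : ℝ} (hσ : 0 < σ) (hcrit : (N : ℝ) * σ ≤ 4) {U : H2 N} (hU : U.IsMin σ) (V : H2 N) :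
    ((∫ x, U.lapl x * conj (V.lapl x)) - 2 * ∑ i, (∫ x, U.grad i x * conj (V.grad i x)) 
      + ((- U.dd σ : ℝ) : ℂ) * (∫ x, U.u x * conj (V.u x)) 
      - (∫ x, ((‖U.u x‖ ^ (2 * σ) : ℝ) : ℂ) * U.u x * conj (V.u x))).re = 0 := by
  obtain ⟨C, hC⟩ := hU.exists_GN hN hσ
  have hm := U.path_mass V
  have hl := U.path_lap V
  have hg := U.path_grad V
  have hp := (path_p hσ hcrit hC U V).2
  have hE : HasDerivAt (fun t => (U.path V t).energy σ) _ 0 := (hl.sub (hg.const_mul 2)).sub (hp.const_mul (1 / (σ + 1)))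
  have hM0 : (U.path V 0).massSq ≠ 0 := by rw [path_mass_zero]; exact hU.1.ne'
  have hd : HasDerivAt (fun t => (U.path V t).dd σ) _ 0 := ((hl.sub (hg.const_mul 2)).sub hp).div hm hM0
  have hh := hE.add (hd.mul (hm.const_sub U.massSq))
  have hmin : IsLocalMin ((fun t => (U.path V t).energy σ) + 
      (fun t => (U.path V t).dd σ) * fun t => U.massSq - (U.path V t).massSq) 0 := by
    have hpos : ∀ᶠ t in 𝓝 (0 : ℝ), 0 < (U.path V t).massSq := 
      hm.continuousAt.eventually (lt_mem_nhds (by change 0 < (U.path V 0).massSq; rw [path_mass_zero]; exact hU.1))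
    filter_upwards [hpos] with t ht
    simp only [Pi.add_apply, Pi.mul_apply, path_mass_zero, path_zero, sub_self, mul_zero, add_zero]
    obtain ⟨W, w1, w2, -⟩ := (U.path V t).key_le hσ ht hU.1
    exact (hU.2 W w1).trans w2
  have h0 := hmin.hasDerivAt_eq_zero hh
  rw [path_mass_zero, path_dd_zero, sub_self, mul_zero, zero_add] at h0
  rw [← Finset.mul_sum] at h0
  have hs : 1 / (σ + 1) * (2 * (σ + 1) * (∫ x, ((‖U.u x‖ ^ (2 * σ) : ℝ) : ℂ) * U.u x * conj (V.u x)).re) = 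
      2 * (∫ x, ((‖U.u x‖ ^ (2 * σ) : ℝ) : ℂ) * U.u x * conj (V.u x)).re := by field_simp
  rw [hs] at h0
  rw [Complex.sub_re, Complex.add_re, Complex.sub_re, Complex.re_ofReal_mul, 
    show (2 : ℂ) = ((2 : ℝ) : ℂ) by norm_num, Complex.re_ofReal_mul, Complex.re_sum]
  linarith

end H2

lemma test_conj {N : ℕ} {φ : Esp N → ℂ} (h : TestFun φ) : TestFun fun x => conj (φ x) := 
  ⟨Complex.conjCLE.contDiff.comp h.1, h.2.comp_left (by simp)⟩

lemma pderiv_conj {N : ℕ} {φ : Esp N → ℂ} (h : TestFun φ) (i : Fin N) : 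
    pderivC i (fun x => conj (φ x)) = fun x => conj (pderivC i φ x) := by
  funext x
  unfold pderivC
  have h1 : HasFDerivAt φ (fderiv ℝ φ x) x := (h.1.differentiable (by simp) x).hasFDerivAt
  have h2 : HasFDerivAt (fun x => conj (φ x)) _ x := Complex.conjCLE.hasFDerivAt.comp x h1
  rw [h2.fderiv]
  simp

lemma lap_conj {N : ℕ} {φ : Esp N → ℂ} (h : TestFun φ) : 
    lapC (fun x => conj (φ x)) = fun x => conj (lapC φ x) := by
  funext x
  unfold lapC
  rw [map_sum]
  refine Finset.sum_congr rfl fun i _ => ?_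
  rw [pderiv_conj h, pderiv_conj (pderivC_test i h)]

lemma test_mulI {N : ℕ} {φ : Esp N → ℂ} (h : TestFun φ) (a : ℂ) : TestFun fun x => a * φ x :=
  ⟨contDiff_const.mul h.1, h.2.mul_left⟩

lemma pderiv_mul {N : ℕ} {φ : Esp N → ℂ} (h : TestFun φ) (a : ℂ) (i : Fin N) : 
    pderivC i (fun x => a * φ x) = fun x => a * pderivC i φ x := by
  funext x
  change fderiv ℝ (fun x => a * φ x) x _ = _
  rw [fderiv_const_mul (h.1.differentiable (by simp) x)]
  rfl

lemma lap_mul {N : ℕ} {φ : Esp N → ℂ} (h : TestFun φ) (a : ℂ) : 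
    lapC (fun x => a * φ x) = fun x => a * lapC φ x := by
  funext x
  unfold lapC
  rw [Finset.mul_sum]
  refine Finset.sum_congr rfl fun i _ => ?_
  rw [pderiv_mul h, pderiv_mul (pderivC_test i h)]

namespace H2
variable {N : ℕ}

/-- left side of the weak equation -/
def XX (σ c : ℝ) (U : H2 N) (φ : Esp N → ℂ) : ℂ := 
    (∫ x, U.lapl x * lapC φ x) + 2 * (∫ x, U.lapl x * φ x) +
        ((1 + c : ℝ) : ℂ) * (∫ x, U.u x * φ x) -
        (∫ x, ((‖U.u x‖ ^ (2 * σ) : ℝ) : ℂ) * U.u x * φ x)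

lemma XX_mul (σ c : ℝ) (U : H2 N) {φ : Esp N → ℂ} (h : TestFun φ) (a : ℂ) : 
    U.XX σ c (fun x => a * φ x) = a * U.XX σ c φ := by
  unfold XX
  rw [lap_mul h]
  have e : ∀ (f g : Esp N → ℂ), ∫ x, f x * (a * g x) = a * ∫ x, f x * g x := by
    intro f g
    rw [← integral_const_mul]; congr 1; funext x; ring
  rw [e, e, e, e (fun x => ((‖U.u x‖ ^ (2 * σ) : ℝ) : ℂ) * U.u x)]
  ring

lemma IsMin.XX_re (hN : 1 ≤ N) {σ : ℝ} (hσ : 0 < σ) (hcrit : (N : ℝ) * σ ≤ 4) {U : H2 N} (hU : U.IsMin σ)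
    {φ : Esp N → ℂ} (h : TestFun φ) : (U.XX σ (- U.dd σ - 1) φ).re = 0 := by
  have := hU.EL hN hσ hcrit (ofTest (test_conj h))
  simp only [ofTest, pderiv_conj h, lap_conj h, Complex.conj_conj] at this
  rw [U.lap_weak h] at this
  rw [← this]
  unfold XX
  congr 1
  rw [show 1 + (- U.dd σ - 1) = - U.dd σ by ring]
  ring

lemma IsMin.solves (hN : 1 ≤ N) {σ : ℝ} (hσ : 0 < σ) (hcrit : (N : ℝ) * σ ≤ 4) {U : H2 N} (hU : U.IsMin σ) :
    SolvesSW σ (- U.dd σ - 1) U := by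
  intro φ h
  change U.XX σ (- U.dd σ - 1) φ = 0
  have h1 := hU.XX_re hN hσ hcrit h
  have h2 := hU.XX_re hN hσ hcrit (test_mulI h Complex.I)
  rw [XX_mul σ _ U h] at h2
  apply Complex.ext
  · simpa using h1
  · simpa using h2

lemma c_unique {σ c c' : ℝ} {U : H2 N} (hU : 0 < U.massSq) (h : SolvesSW σ c U) (h' : SolvesSW σ c' U) : c = c' := by
  by_contra hne
  have : ∀ᵐ x, U.u x = 0 := by
    refine ae_zero_of_test (memLp_locInt U.u_mem) fun ψ hψ => ?_
    have ht : TestFun ψ := ⟨ψ.smooth _, hψ⟩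
    have h1 := h ψ ht
    have h2 := h' ψ ht
    have h3 : ((c - c' : ℝ) : ℂ) * ∫ x, U.u x * ψ x = 0 := by
      push_cast at h1 h2 ⊢
      linear_combination h1 - h2
    rcases mul_eq_zero.1 h3 with h4 | h4
    · exfalso; apply hne
      have : c - c' = 0 := by exact_mod_cast h4
      linarith
    · exact h4
  have h0 : U.massSq = 0 := by
    unfold massSq
    refine integral_eq_zero_of_ae ?_
    filter_upwards [this] with x hx
    simp [hx]
  linarith

end H2

end

/-- Any minimizer of `E` at fixed mass `m` satisfies the Euler–Lagrange
equation `Δ²u + 2Δu + (1+c)u - |u|^{2σ}u = 0` for some `c > 0` with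
`1 + c ∈ [-E'_{min,ℓ}(m), -E'_{min,r}(m)]`; the multipliers are strictly increasing in the
mass; and if `m₀ = sup{m : E_min(m) = -m} > 0` then there is no minimizer for
`m ∈ (0, m₀)`. -/
theorem stmt10 (N : ℕ) (σ : ℝ) (hN : 1 ≤ N) (hσ : 0 < σ) (hcrit : (N : ℝ) * σ ≤ 4)
    (m : ℝ) (hm : 0 < m) (U : H2 N) (hUm : U.massSq = m)
    (hmin : ∀ V : H2 N, V.massSq = m → U.energy σ ≤ V.energy σ) :
    (∃ c : ℝ, 0 < c ∧ SolvesSW σ c U ∧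
      ∃ dl dr : ℝ,
        HasDerivWithinAt (fun t : ℝ => (EminE N σ t).toReal) dl (Set.Iio m) m ∧
        HasDerivWithinAt (fun t : ℝ => (EminE N σ t).toReal) dr (Set.Ioi m) m ∧
        -dl ≤ 1 + c ∧ 1 + c ≤ -dr) ∧
    (∀ (m₁ m₂ : ℝ) (U₁ U₂ : H2 N) (c₁ c₂ : ℝ), 0 < m₁ → m₁ < m₂ →
      U₁.massSq = m₁ → (∀ V : H2 N, V.massSq = m₁ → U₁.energy σ ≤ V.energy σ) →
      U₂.massSq = m₂ → (∀ V : H2 N, V.massSq = m₂ → U₂.energy σ ≤ V.energy σ) →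
      0 < c₁ → SolvesSW σ c₁ U₁ → 0 < c₂ → SolvesSW σ c₂ U₂ → c₁ < c₂) ∧
    (0 < sSup {m' : ℝ | 0 < m' ∧ EminE N σ m' = ((-m' : ℝ) : EReal)} →
      ∀ m' : ℝ, 0 < m' → m' < sSup {m' : ℝ | 0 < m' ∧ EminE N σ m' = ((-m' : ℝ) : EReal)} →
        ¬ ∃ V : H2 N, V.massSq = m' ∧
          ∀ W : H2 N, W.massSq = m' → V.energy σ ≤ W.energy σ) := by
  refine ⟨?_, ?_, ?_⟩
  · subst hUm
    have hU : U.IsMin σ := ⟨hm, hmin⟩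
    obtain ⟨dl, dr, h1, h2, h3, h4⟩ := hU.derivs hN hσ hcrit
    exact ⟨- U.dd σ - 1, hU.c_pos hN hσ hcrit, hU.solves hN hσ hcrit, dl, dr, h1, h2, by linarith, by linarith⟩
  · intro m₁ m₂ U₁ U₂ c₁ c₂ h1 h12 hm1 hmin1 hm2 hmin2 _ hs1 _ hs2
    subst hm1 hm2
    have hU1 : U₁.IsMin σ := ⟨h1, hmin1⟩
    have hU2 : U₂.IsMin σ := ⟨h1.trans h12, hmin2⟩
    have e1 := H2.c_unique hU1.1 hs1 (hU1.solves hN hσ hcrit)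
    have e2 := H2.c_unique hU2.1 hs2 (hU2.solves hN hσ hcrit)
    have := H2.mono_c hN hσ hcrit hU1 hU2 h12
    linarith
  · rintro hpos m' hm' hlt ⟨V, hV, hVmin⟩
    have hne : {m' : ℝ | 0 < m' ∧ EminE N σ m' = ((-m' : ℝ) : EReal)}.Nonempty := by
      by_contra h
      rw [Set.not_nonempty_iff_eq_empty] at h
      rw [h, Real.sSup_empty] at hpos
      exact lt_irrefl _ hpos
    obtain ⟨t, ht, hlt'⟩ := exists_lt_of_lt_csSup hne hlt
    subst hV
    exact H2.no_min hN hσ hcrit ⟨hm', hVmin⟩ hlt' ht.2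

end
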